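/- Under Assumptions A1 and A2, let γ ≥ 0, g ∈ L_{W^γ} (with W = log V), n ≥ 1 and assume Var_π(S_n) > 0. Define J_n = max( n·ρ^{−1/2}·(log(1/ρ))^{−1}·C_0²·‖ḡ‖_{W^γ}² / Var_π(S_n), 1 )·2^{1+3γ}·γ^{3γ}·C_0·‖ḡ‖_{W^γ}/log(1/ρ), with C_0 = 2cπ(V) and the convention 0^0 = 1. Then (i) for every t ≥ 0, P_π(|S_n| ≥ t) ≤ 2·exp( −(t²/2)/(Var_π(S_n) + J_n^{1/(γ+3)}·t^{2−1/(γ+3)}) ); and (ii) for every δ ∈ (0,1), P_π( |S_n| ≥ 2·√(Var_π(S_n))·√(log(4/δ)) + 4^{γ+3}·J_n·(log(4/δ))^{γ+3} ) ≤ δ. -/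

import Mathlib

open MeasureTheory ProbabilityTheory Finset
open scoped ENNReal Classical

noncomputable section

/-- `n`-th iterate of a Markov kernel. -/
def kIter {Y : Type*} [MeasurableSpace Y] (Q : ProbabilityTheory.Kernel Y Y) :
    ℕ → ProbabilityTheory.Kernel Y Y
  | 0 => ProbabilityTheory.Kernel.id
  | n + 1 => (kIter Q n).comp Q

/-- `U`-weighted total variation distance between two finite measures:
`∫ U d|μ - ν|`, via the Jordan decomposition of `μ - ν`. -/
def wTV {Y : Type*} [MeasurableSpace Y] (U : Y → ℝ) (μ ν : Measure Y) : ℝ :=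
  (∫ x, U x ∂(μ - ν)) + ∫ x, U x ∂(ν - μ)

/-- `U`-weighted sup norm `‖g‖_U = sup_x |g x| / U x`. -/
def vnorm {Y : Type*} (U : Y → ℝ) (g : Y → ℝ) : ℝ := ⨆ x, |g x| / U x

/-- Membership in the class `L_U`: measurable with finite `U`-weighted sup norm. -/
structure MemL {Y : Type*} [MeasurableSpace Y] (U : Y → ℝ) (g : Y → ℝ) : Prop where
  meas : Measurable g
  bdd : BddAbove (Set.range fun x => |g x| / U x)

/-- `(Xs n)` is a Markov chain with initial distribution `ξ` and Markov kernel `Q`: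
the law of `Xs 0` is `ξ` and, conditionally on the past up to time `n`, the
distribution of `Xs (n+1)` is `Q (Xs n)`. -/
structure IsMarkovChain {X : Type*} [MeasurableSpace X] {Ω : Type*} [MeasurableSpace Ω]
    (P : Measure Ω) (Xs : ℕ → Ω → X) (ξ : Measure X)
    (Q : ProbabilityTheory.Kernel X X) : Prop where
  meas : ∀ n, Measurable (Xs n)
  init : P.map (Xs 0) = ξ
  markov : ∀ (n : ℕ) (f : X → ℝ), Measurable f → (∀ x, |f x| ≤ 1) →
    (P[fun ω => f (Xs (n + 1) ω) |
        ⨆ i ∈ Finset.range (n + 1), MeasurableSpace.comap (Xs i) inferInstance])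
      =ᵐ[P] fun ω => ∫ y, f y ∂(Q (Xs n ω))

/-- The combinatorial coefficient `B_γ(u,q)`. -/
def Bcoef (γ : ℝ) (u q : ℕ) : ℝ :=
  ((2 * q).factorial : ℝ) / (u.factorial : ℝ) *
    ∑ k ∈ Finset.univ.filter
        (fun k : Fin u → Fin (2 * q + 1) =>
          (∀ i, 2 ≤ (k i : ℕ)) ∧ ∑ i, (k i : ℕ) = 2 * q),
      ∏ i, ((k i : ℕ).factorial : ℝ) ^ (γ + 2)

/-- The `2q`-th moment `(2q)!/(q! 2^q)` of the standard Gaussian. -/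
def gaussMoment (q : ℕ) : ℝ := ((2 * q).factorial : ℝ) / ((q.factorial : ℝ) * 2 ^ q)

/-!
The Laplace transform of `S_n`, read as a formal power series in `s`, factorises: conditioning
successively on the past turns it into the product of the `π`-means `r_0 ⋯ r_{n-1}`, where `r_m` is
the mean of `e^{s ḡ}` times the normalised `m`-fold image of `1` under `F ↦ Q (e^{s ḡ} F)`. Hence
the cumulants of `S_n` are sums of the coefficients of the logarithmic derivatives `r_m' / r_m`.

To bound the cumulant of order `K`, put `v = V ^ (1 / K)`. Interpolating geometric ergodicity
between `V` and `1` gives a spectral gap on the functions bounded by `v ^ i`, for every `i < K`,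
and `|ḡ| ≤ b v` with `b` proportional to `K ^ γ`. A majorant series then controls the normalised
images up to degree `K`, and the cumulant of order `K` is at most of size `K! ^ (γ + 3)` times a
geometric factor. The variance is kept exact as the cumulant of order two.

Such cumulants grow too fast for an exponential Markov inequality. Instead, the recursion between
moments and cumulants bounds the moments of even order by nearly Gaussian ones, up to an order that
depends on `t`, and Markov's inequality is applied with the optimal moment.
-/

section GaussianMoments

open scoped Nat

lemma gaussMoment_one : gaussMoment 1 = 1 := by
  norm_num [gaussMoment]

lemma gaussMoment_succ (q : ℕ) : gaussMoment (q + 1) = (2 * q + 1) * gaussMoment q := by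
  have hfact : ((2 * (q + 1))! : ℝ) = (2 * q + 2) * (2 * q + 1) * ((2 * q)! : ℝ) := by
    rw [show 2 * (q + 1) = 2 * q + 1 + 1 by ring, Nat.factorial_succ, Nat.factorial_succ]
    push_cast
    ring
  rw [gaussMoment, gaussMoment, hfact, Nat.factorial_succ]
  push_cast
  field_simp
  ring

lemma gaussMoment_eq_factorial_div_doubleFactorial (q : ℕ) :
    gaussMoment q = ((2 * q)! : ℝ) / ((2 * q)‼ : ℝ) := by
  rw [gaussMoment, Nat.doubleFactorial_two_mul]
  push_cast
  rw [mul_comm (2 ^ q : ℝ)]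

lemma one_sub_inv_mul_exp_one_le_one_add_inv_pow {n : ℕ} (hn : n ≠ 0) :
    (1 - 1 / (2 * n : ℝ)) * Real.exp 1 ≤ (1 + 1 / (n : ℝ)) ^ n := by
  have hn₀ : (0 : ℝ) < n := by positivity
  have hlog : 2 / (2 * n + 1) ≤ Real.log (1 + 1 / (n : ℝ)) := by
    refine Eq.trans_le ?_ (Real.le_log_one_add_of_nonneg (by positivity))
    field_simp
    ring
  have hexp : 1 - 1 / (2 * n : ℝ) ≤ Real.exp (-(1 / (2 * n + 1))) := by
    have hle : 1 / (2 * n + 1 : ℝ) ≤ 1 / (2 * n) :=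
      one_div_le_one_div_of_le (by positivity) (by linarith)
    linarith [Real.add_one_le_exp (-(1 / (2 * n + 1 : ℝ)))]
  calc (1 - 1 / (2 * n : ℝ)) * Real.exp 1
      ≤ Real.exp (-(1 / (2 * n + 1))) * Real.exp 1 := by gcongr
    _ = Real.exp (n * (2 / (2 * n + 1))) := by
        rw [← Real.exp_add]
        congr 1
        field_simp
        ring
    _ ≤ Real.exp (n * Real.log (1 + 1 / (n : ℝ))) := by gcongr
    _ = (1 + 1 / (n : ℝ)) ^ n := by rw [Real.exp_nat_mul, Real.exp_log (by positivity)]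

lemma gaussMoment_mul_exp_le {q : ℕ} (hq : 1 ≤ q) :
    gaussMoment q * Real.exp (q + 1) ≤ 2 * (2 * q + 2) ^ q := by
  induction q, hq using Nat.le_induction with
  | base =>
    have hexp : Real.exp ((1 : ℕ) + 1) = Real.exp 1 * Real.exp 1 := by
      rw [← Real.exp_add, Nat.cast_one]
    rw [gaussMoment_one, hexp]
    norm_num
    nlinarith [Real.exp_one_lt_d9, Real.exp_pos 1]
  | succ q _ ih =>
    have hexp : Real.exp ((q + 1 : ℕ) + 1) = Real.exp 1 * Real.exp (q + 1) := by
      rw [← Real.exp_add]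
      push_cast
      ring_nf
    have hcompare := one_sub_inv_mul_exp_one_le_one_add_inv_pow q.succ_ne_zero
    push_cast [Nat.succ_eq_add_one] at hcompare
    calc gaussMoment (q + 1) * Real.exp ((q + 1 : ℕ) + 1)
        = (2 * q + 1) * Real.exp 1 * (gaussMoment q * Real.exp (q + 1)) := by
          rw [gaussMoment_succ, hexp]; ring
      _ ≤ (2 * q + 1) * Real.exp 1 * (2 * (2 * q + 2) ^ q) := by gcongr
      _ = 2 * (2 * q + 2) ^ (q + 1) * ((1 - 1 / (2 * (q + 1))) * Real.exp 1) := by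
          field_simp
          ring
      _ ≤ 2 * (2 * q + 2) ^ (q + 1) * (1 + 1 / ((q : ℝ) + 1)) ^ (q + 1) := by gcongr
      _ = 2 * (2 * (q + 1 : ℕ) + 2) ^ (q + 1) := by
          rw [mul_assoc, ← mul_pow]
          congr 2
          push_cast
          field_simp

lemma pow_mul_exp_neg_half_le {q : ℕ} {u v : ℝ} (hq : 1 ≤ q) (hu : 2 * q ≤ u) (huv : u ≤ v) :
    v ^ q * Real.exp (-(v / 2)) ≤ u ^ q * Real.exp (-(u / 2)) := by
  have hq₀ : (0 : ℝ) < q := by exact_mod_cast hq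
  have hu₀ : 0 < u := by linarith
  have hratio : v ≤ u * Real.exp ((v - u) / (2 * q)) := by
    calc v = u * ((v - u) / u + 1) := by field_simp; ring
      _ ≤ u * ((v - u) / (2 * q) + 1) := by gcongr
      _ ≤ u * Real.exp ((v - u) / (2 * q)) := by gcongr; exact Real.add_one_le_exp _
  calc v ^ q * Real.exp (-(v / 2))
      ≤ (u * Real.exp ((v - u) / (2 * q))) ^ q * Real.exp (-(v / 2)) := by
        gcongr
        linarith
    _ = u ^ q * Real.exp (-(u / 2)) := by
        rw [mul_pow, ← Real.exp_nat_mul, mul_assoc, ← Real.exp_add]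
        congr 2
        field_simp
        ring

lemma gaussMoment_le_exp_neg_mul_pow {q : ℕ} {u : ℝ} (hq : 1 ≤ q) (hqu : 2 * q ≤ u)
    (huq : u ≤ 2 * q + 2) : gaussMoment q ≤ 2 * Real.exp (-(u / 2)) * u ^ q := by
  have hexp : Real.exp (-((2 * q + 2 : ℝ) / 2)) * Real.exp (q + 1) = 1 := by
    rw [← Real.exp_add, Real.exp_eq_one_iff]
    ring
  calc gaussMoment q
      = gaussMoment q * Real.exp (q + 1) * Real.exp (-((2 * q + 2 : ℝ) / 2)) := by
        rw [mul_assoc, mul_comm (Real.exp _), hexp, mul_one]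
    _ ≤ 2 * (2 * q + 2) ^ q * Real.exp (-((2 * q + 2 : ℝ) / 2)) := by
        gcongr ?_ * _
        exact gaussMoment_mul_exp_le hq
    _ ≤ 2 * Real.exp (-(u / 2)) * u ^ q := by
        linarith [pow_mul_exp_neg_half_le hq hqu huq]

lemma one_le_two_mul_exp_neg_half_mul {u : ℝ} (hu₁ : 1 ≤ u) (hu₄ : u ≤ 4) :
    1 ≤ 2 * Real.exp (-(u / 2)) * u := by
  have hexp_one := Real.exp_one_lt_d9
  have hhalf : Real.exp (1 / 2) ≤ 2 := by
    refine le_of_pow_le_pow_left₀ two_ne_zero zero_le_two ?_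
    rw [← Real.exp_nat_mul]
    norm_num
    linarith
  have htwo : Real.exp 2 ≤ 8 := by
    rw [show (2 : ℝ) = 1 + 1 by norm_num, Real.exp_add]
    nlinarith [Real.exp_pos 1]
  have hchord : Real.exp (u / 2) ≤ 2 * u := by
    have hconv := convexOn_exp.2 (Set.mem_univ (1 / 2)) (Set.mem_univ 2)
      (by linarith : 0 ≤ (4 - u) / 3) (by linarith : 0 ≤ (u - 1) / 3) (by ring)
    simp only [smul_eq_mul] at hconv
    rw [show (4 - u) / 3 * (1 / 2) + (u - 1) / 3 * 2 = u / 2 by ring] at hconv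
    nlinarith
  have hinv : Real.exp (-(u / 2)) * Real.exp (u / 2) = 1 := by
    rw [← Real.exp_add, neg_add_cancel, Real.exp_zero]
  nlinarith [Real.exp_pos (-(u / 2))]

lemma le_two_mul_exp_neg_half_of_moment_le {M u : ℝ} (hM : M ≤ 1) (hMu : M * u ≤ 1)
    (hmom : ∀ q : ℕ, 4 ≤ u → 2 * q ≤ u → M * u ^ q ≤ gaussMoment q) :
    M ≤ 2 * Real.exp (-(u / 2)) := by
  rcases le_or_gt u 1 with hu₁ | hu₁
  · linarith [Real.add_one_le_exp (-(u / 2))]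
  have hu₀ : 0 < u := by linarith
  rcases le_or_gt u 4 with hu₄ | hu₄
  · exact le_of_mul_le_mul_right (hMu.trans (one_le_two_mul_exp_neg_half_mul hu₁.le hu₄)) hu₀
  · set q := ⌊u / 2⌋₊
    have hq : 1 ≤ q := Nat.le_floor (by push_cast; linarith)
    have hqu : 2 * (q : ℝ) ≤ u := by linarith [Nat.floor_le (half_pos hu₀).le]
    have huq : u ≤ 2 * q + 2 := by linarith [Nat.lt_floor_add_one (u / 2)]
    exact le_of_mul_le_mul_right
      ((hmom q hu₄.le hqu).trans (gaussMoment_le_exp_neg_mul_pow hq hqu huq)) (pow_pos hu₀ q)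

end GaussianMoments

section CumulantTail

open scoped Nat

lemma two_mul_doubleFactorial_succ_le (n : ℕ) : 2 * (n + 1)‼ ≤ (n + 3) * n‼ := by
  induction n using Nat.twoStepInduction with
  | zero => decide
  | one => decide
  | more n ih _ =>
    rw [Nat.doubleFactorial_add_two, Nat.doubleFactorial_add_two]
    nlinarith

lemma two_mul_doubleFactorial_add_succ_le {w : ℝ} (hw : 2 ≤ w) {n j : ℕ}
    (hnj : (n : ℝ) + j + 3 ≤ w ^ 2) :
    2 * ((n + j + 1)‼ : ℝ) ≤ w ^ (j + 2) * (n‼ : ℝ) := by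
  have hn : (0 : ℝ) ≤ (n‼ : ℝ) := Nat.cast_nonneg _
  induction j using Nat.twoStepInduction with
  | zero =>
    have hsucc : (2 : ℝ) * ((n + 1)‼ : ℝ) ≤ (n + 3) * (n‼ : ℝ) := by
      exact_mod_cast two_mul_doubleFactorial_succ_le n
    push_cast at hnj
    simp only [add_zero, zero_add]
    nlinarith
  | one =>
    rw [Nat.doubleFactorial_add_two]
    push_cast at hnj ⊢
    nlinarith [mul_le_mul_of_nonneg_right hw (sq_nonneg w)]
  | more j ih _ =>
    rw [show n + (j + 2) + 1 = n + j + 1 + 2 by ring, Nat.doubleFactorial_add_two]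
    push_cast at hnj ⊢
    calc 2 * (((n : ℝ) + j + 1 + 2) * ((n + j + 1)‼ : ℝ))
        = ((n : ℝ) + j + 1 + 2) * (2 * ((n + j + 1)‼ : ℝ)) := by ring
      _ ≤ w ^ 2 * (w ^ (j + 2) * (n‼ : ℝ)) := by
          exact mul_le_mul (by linarith) (ih (by linarith)) (by positivity) (sq_nonneg w)
      _ = w ^ (j + 2 + 2) * (n‼ : ℝ) := by ring

/-- `L` is the sequence of coefficients of the logarithmic derivative of the power series with
coefficients `B`, normalised by `B 0 = 1`. When `B p = E[S ^ p] / p!`, the coefficient `L p` is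
the cumulant of order `p + 1` divided by `p!`. -/
structure IsLogDerivCoeff (L B : ℕ → ℝ) : Prop where
  zero : B 0 = 1
  succ : ∀ p : ℕ, ((p : ℝ) + 1) * B (p + 1) = ∑ k ∈ range (p + 1), L k * B (p - k)

namespace IsLogDerivCoeff

variable {L B : ℕ → ℝ}

lemma scale (h : IsLogDerivCoeff L B) (s : ℝ) :
    IsLogDerivCoeff (fun k => L k * s ^ (k + 1)) (fun p => B p * s ^ p) where
  zero := by rw [h.zero, pow_zero, one_mul]
  succ p := by
    rw [← mul_assoc, h.succ, sum_mul]
    refine sum_congr rfl fun k hk => ?_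
    have hkp : k + 1 + (p - k) = p + 1 := by have := mem_range.1 hk; omega
    rw [← hkp, pow_add]
    ring

lemma coeff_one (h : IsLogDerivCoeff L B) : B 1 = L 0 := by
  simpa [h.zero] using h.succ 0

lemma succ_succ (h : IsLogDerivCoeff L B) (hL₀ : L 0 = 0) (p : ℕ) :
    ((p : ℝ) + 2) * B (p + 2) =
      ∑ j ∈ range p, L (j + 2) * B (p + 1 - (j + 2)) + L 1 * B p := by
  have hsucc := h.succ (p + 1)
  rw [sum_range_succ', sum_range_succ', hL₀, zero_mul, add_zero, zero_add] at hsucc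
  rw [show (p : ℝ) + 2 = (p + 1 : ℕ) + 1 by push_cast; ring]
  exact hsucc

lemma two_mul_coeff_two (h : IsLogDerivCoeff L B) (hL₀ : L 0 = 0) : 2 * B 2 = L 1 := by
  simpa [h.zero] using h.succ_succ hL₀ 0

end IsLogDerivCoeff

lemma geom_weight_sum_le {r : ℝ} (hr₀ : 0 ≤ r) (hr₁ : r < 1) (n : ℕ) :
    45 / 16 * (1 - r) * r ^ 3 * ∑ j ∈ range n, (r ^ 3) ^ j ≤ r := by
  set A := ∑ j ∈ range n, (r ^ 3) ^ j
  have hgeom : A * (1 - r ^ 3) ≤ 1 := by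
    rw [geom_sum_mul_neg]
    linarith [show 0 ≤ (r ^ 3) ^ n by positivity]
  have hA₀ : 0 ≤ (1 - r) * A := mul_nonneg (by linarith) (sum_nonneg fun j _ => by positivity)
  have hA₁ : (1 + r + r ^ 2) * ((1 - r) * A) ≤ 1 := by linarith
  have hquad : 45 / 16 * r ^ 2 ≤ 1 + r + r ^ 2 := by nlinarith
  calc 45 / 16 * (1 - r) * r ^ 3 * A = r * (45 / 16 * r ^ 2 * ((1 - r) * A)) := by ring
    _ ≤ r * 1 := by
        gcongr
        exact (mul_le_mul_of_nonneg_right hquad hA₀).trans hA₁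
    _ = r := mul_one r

lemma abs_mul_le_geom_of_doubleFactorial {w r l B : ℝ} (hw : 2 ≤ w) (hr₀ : 0 ≤ r) (hr₁ : r < 1)
    {n j : ℕ} (hnj : (n : ℝ) + j + 3 ≤ w ^ 2)
    (hl : |l| ≤ 45 / 8 * (1 - r) * r ^ (3 * (j + 1)) / w ^ (j + 2))
    (hB : |B| ≤ 1 / (n‼ : ℝ)) :
    |l * B| ≤ 45 / 16 * (1 - r) * r ^ 3 * (r ^ 3) ^ j * (1 / ((n + j + 1)‼ : ℝ)) := by
  have hn : (0 : ℝ) < (n‼ : ℝ) := by exact_mod_cast Nat.doubleFactorial_pos n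
  have hnj₀ : (0 : ℝ) < ((n + j + 1)‼ : ℝ) := by exact_mod_cast Nat.doubleFactorial_pos _
  have hratio : 1 / (n‼ : ℝ) ≤ w ^ (j + 2) / 2 * (1 / ((n + j + 1)‼ : ℝ)) := by
    rw [mul_one_div, div_le_div_iff₀ hn hnj₀]
    linarith [two_mul_doubleFactorial_add_succ_le hw hnj]
  have hr : 0 ≤ 1 - r := by linarith
  calc |l * B| = |l| * |B| := abs_mul _ _
    _ ≤ 45 / 8 * (1 - r) * r ^ (3 * (j + 1)) / w ^ (j + 2) *
          (w ^ (j + 2) / 2 * (1 / ((n + j + 1)‼ : ℝ))) := by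
        gcongr
        exact hB.trans hratio
    _ = 45 / 16 * (1 - r) * r ^ 3 * (r ^ 3) ^ j * (1 / ((n + j + 1)‼ : ℝ)) := by
        rw [show r ^ (3 * (j + 1)) = r ^ 3 * (r ^ 3) ^ j by rw [← pow_mul]; ring]
        field_simp
        ring

lemma IsLogDerivCoeff.abs_le_one_div_doubleFactorial {L B : ℕ → ℝ} (h : IsLogDerivCoeff L B)
    {N : ℕ} {w r : ℝ} (hw : 2 ≤ w) (hN : N ≤ w ^ 2) (hr₀ : 0 ≤ r) (hr₁ : r < 1)
    (hL₀ : L 0 = 0) (hL₁ : L 1 = 1 - r)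
    (hL : ∀ j, j + 3 ≤ N → |L (j + 2)| ≤ 45 / 8 * (1 - r) * r ^ (3 * (j + 1)) / w ^ (j + 2)) :
    ∀ p ≤ N, |B p| ≤ 1 / (p‼ : ℝ) := by
  intro p
  induction p using Nat.strong_induction_on with
  | _ p ih =>
  intro hp
  match p with
  | 0 => simp [h.zero]
  | 1 => simp [h.coeff_one, hL₀]
  | n + 2 =>
    have hn : (0 : ℝ) < (n‼ : ℝ) := by exact_mod_cast Nat.doubleFactorial_pos n
    have hterm : ∀ j ∈ range n, |L (j + 2) * B (n + 1 - (j + 2))| ≤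
        45 / 16 * (1 - r) * r ^ 3 * (r ^ 3) ^ j * (1 / (n‼ : ℝ)) := by
      intro j hj
      obtain ⟨i, rfl⟩ : ∃ i, n = i + j + 1 := ⟨n - j - 1, by have := mem_range.1 hj; omega⟩
      rw [show i + j + 1 + 1 - (j + 2) = i by omega]
      have hij : ((i + j + 1 + 2 : ℕ) : ℝ) ≤ N := by exact_mod_cast hp
      push_cast at hij
      exact abs_mul_le_geom_of_doubleFactorial hw hr₀ hr₁ (by linarith) (hL j (by omega))
        (ih i (by omega) (by omega))
    have hrec : ((n : ℝ) + 2) * B (n + 2) =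
        ∑ j ∈ range n, L (j + 2) * B (n + 1 - (j + 2)) + (1 - r) * B n := by
      rw [h.succ_succ hL₀, hL₁]
    have hbound : |((n : ℝ) + 2) * B (n + 2)| ≤ 1 / (n‼ : ℝ) := by
      rw [hrec]
      calc |∑ j ∈ range n, L (j + 2) * B (n + 1 - (j + 2)) + (1 - r) * B n|
          ≤ (∑ j ∈ range n, 45 / 16 * (1 - r) * r ^ 3 * (r ^ 3) ^ j * (1 / (n‼ : ℝ))) +
              (1 - r) * (1 / (n‼ : ℝ)) := by
            refine (abs_add_le _ _).trans (add_le_add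
              ((abs_sum_le_sum_abs _ _).trans (sum_le_sum hterm)) ?_)
            rw [abs_mul, abs_of_nonneg (sub_nonneg.2 hr₁.le)]
            exact mul_le_mul_of_nonneg_left (ih n (by omega) (by omega)) (sub_nonneg.2 hr₁.le)
        _ ≤ r * (1 / (n‼ : ℝ)) + (1 - r) * (1 / (n‼ : ℝ)) := by
            rw [← sum_mul, ← mul_sum]
            gcongr
            exact geom_weight_sum_le hr₀ hr₁ n
        _ = 1 / (n‼ : ℝ) := by ring
    rw [abs_mul, abs_of_pos (by positivity), le_div_iff₀ hn] at hbound
    rw [Nat.doubleFactorial_add_two, le_div_iff₀ (by positivity)]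
    push_cast
    linarith

lemma factorial_add_three_le (j : ℕ) : (j + 3)! ≤ 2 * (j + 3) ^ (j + 1) := by
  induction j with
  | zero => decide
  | succ j ih =>
    calc (j + 1 + 3)! = (j + 4) * (j + 3)! := Nat.factorial_succ _
      _ ≤ (j + 4) * (2 * (j + 4) ^ (j + 1)) := by
          gcongr
          exact ih.trans (by gcongr; omega)
      _ = 2 * (j + 1 + 3) ^ (j + 1 + 1) := by ring

lemma sq_mul_factorial_pow_four_le (j : ℕ) :
    (j + 4) ^ 2 * (j + 4)! ^ 4 ≤ 324 * (j + 4) ^ (4 * j + 7) := by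
  induction j with
  | zero => decide
  | succ j ih =>
    refine Nat.le_of_mul_le_mul_left ?_ (show 0 < (j + 4) ^ 2 by positivity)
    calc (j + 4) ^ 2 * ((j + 1 + 4) ^ 2 * (j + 1 + 4)! ^ 4)
        = (j + 5) ^ 6 * ((j + 4) ^ 2 * (j + 4)! ^ 4) := by
          rw [show (j + 1 + 4)! = (j + 5) * (j + 4)! from Nat.factorial_succ _]
          ring
      _ ≤ (j + 5) ^ 6 * (324 * (j + 4) ^ (4 * j + 7)) := by gcongr
      _ = 324 * (j + 4) ^ 2 * (j + 5) ^ 6 * (j + 4) ^ (4 * j + 5) := by ring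
      _ ≤ 324 * (j + 4) ^ 2 * (j + 5) ^ 6 * (j + 5) ^ (4 * j + 5) := by gcongr; omega
      _ = (j + 4) ^ 2 * (324 * (j + 1 + 4) ^ (4 * (j + 1) + 7)) := by ring

lemma mul_factorial_sq_le_pow {w : ℝ} (hw : 2 ≤ w) {j : ℕ} (hj : (j : ℝ) + 3 ≤ w ^ 2) :
    ((j : ℝ) + 3) * ((j + 3)! : ℝ) ^ 2 ≤ 18 * w ^ (4 * j + 3) := by
  refine le_of_pow_le_pow_left₀ two_ne_zero (by positivity) ?_
  rw [show (18 * w ^ (4 * j + 3)) ^ 2 = 324 * (w ^ 2) ^ (4 * j + 3) by ring]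
  rcases j with _ | j
  · have hcube : (4 : ℝ) ^ 3 ≤ (w ^ 2) ^ 3 := pow_le_pow_left₀ (by norm_num) (by nlinarith) 3
    norm_num [Nat.factorial] at hcube ⊢
    linarith
  · push_cast at hj
    calc (((j + 1 : ℕ) + 3) * ((j + 1 + 3)! : ℝ) ^ 2) ^ 2
        = ((j : ℝ) + 4) ^ 2 * ((j + 4)! : ℝ) ^ 4 := by push_cast; ring
      _ ≤ 324 * ((j : ℝ) + 4) ^ (4 * j + 7) := by exact_mod_cast sq_mul_factorial_pow_four_le j
      _ ≤ 324 * (w ^ 2) ^ (4 * j + 7) := by gcongr; linarith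
      _ = 324 * (w ^ 2) ^ (4 * (j + 1) + 3) := by ring

lemma rpow_mul_rpow_neg_pow_le {a F y : ℝ} (ha : 3 ≤ a) (hF : 0 < F) (hy : 0 < y) {n : ℕ}
    (hFy : F ≤ y ^ n) : F ^ a * (y ^ (-a)) ^ n ≤ (F / y ^ n) ^ 3 := by
  calc F ^ a * (y ^ (-a)) ^ n = (F / y ^ n) ^ a := by
        rw [Real.div_rpow hF.le (by positivity), Real.rpow_neg hy.le, inv_pow, ← div_eq_mul_inv,
          Real.rpow_pow_comm hy.le]
    _ ≤ (F / y ^ n) ^ (3 : ℝ) :=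
        Real.rpow_le_rpow_of_exponent_ge (by positivity) (div_le_one_of_le₀ hFy (by positivity)) ha
    _ = (F / y ^ n) ^ 3 := by norm_cast

lemma factorial_rpow_mul_le {a w r : ℝ} (ha : 3 ≤ a) (hw : 2 ≤ w) (hr₀ : 0 < r) (hr₁ : r < 1)
    {j : ℕ} (hj : (j : ℝ) + 3 ≤ w ^ 2) :
    (((j + 3)! : ℝ) / 2) ^ a * ((w ^ 2 / r) ^ (-a)) ^ (j + 1) * w ^ (j + 1) / ((j + 2)! : ℝ) ≤
      9 / 4 * r ^ (3 * (j + 1)) / w ^ (j + 2) := by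
  have hFy : ((j + 3)! : ℝ) / 2 ≤ (w ^ 2 / r) ^ (j + 1) := by
    calc ((j + 3)! : ℝ) / 2 ≤ ((j : ℝ) + 3) ^ (j + 1) := by
          rw [div_le_iff₀' two_pos]
          exact_mod_cast factorial_add_three_le j
      _ ≤ (w ^ 2 / r) ^ (j + 1) := by
          gcongr
          exact hj.trans (le_div_self (sq_nonneg w) hr₀ hr₁.le)
  have hcube : (((j + 3)! : ℝ) / 2 / (w ^ 2 / r) ^ (j + 1)) ^ 3 =
      ((j + 3)! : ℝ) ^ 3 / 8 * r ^ (3 * (j + 1)) / w ^ (6 * (j + 1)) := by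
    simp only [div_pow]
    field_simp
    ring
  calc (((j + 3)! : ℝ) / 2) ^ a * ((w ^ 2 / r) ^ (-a)) ^ (j + 1) * w ^ (j + 1) / ((j + 2)! : ℝ)
      ≤ ((j + 3)! : ℝ) ^ 3 / 8 * r ^ (3 * (j + 1)) / w ^ (6 * (j + 1)) *
          w ^ (j + 1) / ((j + 2)! : ℝ) := by
        rw [← hcube]
        gcongr
        exact rpow_mul_rpow_neg_pow_le ha (by positivity) (by positivity) hFy
    _ = ((j : ℝ) + 3) * ((j + 3)! : ℝ) ^ 2 *
          (r ^ (3 * (j + 1)) * w ^ (j + 1) / (8 * w ^ (6 * (j + 1)))) := by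
        have hfact : ((j + 3)! : ℝ) = (j + 3) * ((j + 2)! : ℝ) := by
          rw [Nat.factorial_succ]
          push_cast
          ring
        rw [pow_succ ((j + 3)! : ℝ) 2]
        nth_rewrite 2 [hfact]
        field_simp
    _ ≤ 18 * w ^ (4 * j + 3) * (r ^ (3 * (j + 1)) * w ^ (j + 1) / (8 * w ^ (6 * (j + 1)))) := by
        gcongr ?_ * _
        exact mul_factorial_sq_le_pow hw hj
    _ = 9 / 4 * r ^ (3 * (j + 1)) / w ^ (j + 2) := by
        rw [show w ^ (6 * (j + 1)) = w ^ (4 * j + 3) * w ^ (j + 1) * w ^ (j + 2) by ring]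
        field_simp
        ring

lemma bernstein_denominator_eq {a J t : ℝ} (hJ : 0 < J) (ht : 0 < t) :
    J ^ (1 / a) * t ^ (2 - 1 / a) = t ^ 2 / (t / J) ^ (1 / a) := by
  rw [Real.div_rpow ht.le hJ.le, Real.rpow_sub ht, Real.rpow_two]
  have := Real.rpow_pos_of_pos ht (1 / a)
  have := Real.rpow_pos_of_pos hJ (1 / a)
  field_simp

/-- The bounds on cumulants, in terms of the coefficients `Λ p` of the logarithmic derivative of the
moment generating series, which produce a Bernstein type inequality with variance `σ2`, scale `J`
and exponent `a`. -/
structure CumulantBounds (a σ2 J : ℝ) (Λ : ℕ → ℝ) : Prop where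
  zero : Λ 0 = 0
  one : Λ 1 = σ2
  add_two : ∀ j : ℕ, |Λ (j + 2)| ≤
    5 / 2 * (((j + 3)! : ℝ) / 2) ^ a * σ2 * J ^ (j + 1) / ((j + 2)! : ℝ)

lemma CumulantBounds.abs_add_two_mul_pow_le {a σ2 J t w r : ℝ} {Λ : ℕ → ℝ}
    (hΛ : CumulantBounds a σ2 J Λ) (ha : 3 ≤ a) (hσ : 0 < σ2) (ht : 0 < t) (hw : 2 ≤ w)
    (hr₀ : 0 < r) (hr₁ : r < 1) (hJ : J / t = (w ^ 2 / r) ^ (-a)) {j : ℕ}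
    (hjw : (j : ℝ) + 3 ≤ w ^ 2) :
    |Λ (j + 2)| * (w / t) ^ (j + 2 + 1) ≤
      45 / 8 * (σ2 * w ^ 2 / t ^ 2) * r ^ (3 * (j + 1)) / w ^ (j + 2) := by
  calc |Λ (j + 2)| * (w / t) ^ (j + 2 + 1)
      ≤ 5 / 2 * (((j + 3)! : ℝ) / 2) ^ a * σ2 * J ^ (j + 1) / ((j + 2)! : ℝ) *
          (w / t) ^ (j + 2 + 1) := by gcongr; exact hΛ.add_two j
    _ = 5 / 2 * (σ2 * w ^ 2 / t ^ 2) *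
          ((((j + 3)! : ℝ) / 2) ^ a * (J / t) ^ (j + 1) * w ^ (j + 1) / ((j + 2)! : ℝ)) := by
        simp only [div_pow]
        field_simp
        ring
    _ ≤ 5 / 2 * (σ2 * w ^ 2 / t ^ 2) * (9 / 4 * r ^ (3 * (j + 1)) / w ^ (j + 2)) := by
        rw [hJ]
        gcongr _ * ?_
        exact factorial_rpow_mul_le ha hw hr₀ hr₁ hjw
    _ = 45 / 8 * (σ2 * w ^ 2 / t ^ 2) * r ^ (3 * (j + 1)) / w ^ (j + 2) := by ring

lemma CumulantBounds.factorial_mul_moment_mul_pow_le {a σ2 J t y u : ℝ} {Λ β : ℕ → ℝ}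
    (hΛ : CumulantBounds a σ2 J Λ) (hβ : IsLogDerivCoeff Λ β) (ha : 3 ≤ a) (hσ : 0 < σ2)
    (ht : 0 < t) (hy : 0 < y) (hJ : J / t = y ^ (-a)) (hu : u = t ^ 2 / (σ2 + t ^ 2 / y))
    (hu₄ : 4 ≤ u) {q : ℕ} (hq : 2 * q ≤ u) :
    ((2 * q)! : ℝ) * β (2 * q) * u ^ q ≤ gaussMoment q * t ^ (2 * q) := by
  set w := √u
  set r := u / y with hr_def
  have hu₀ : 0 < u := by linarith
  have hw : 2 ≤ w := Real.le_sqrt_of_sq_le (by linarith)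
  have hwu : w ^ 2 = u := Real.sq_sqrt hu₀.le
  have hr₀ : 0 < r := by positivity
  have hyr : y = w ^ 2 / r := by rw [hwu, hr_def]; field_simp
  have hσr : σ2 * w ^ 2 / t ^ 2 = 1 - r := by rw [hwu, hr_def, hu]; field_simp; ring
  have hr₁ : r < 1 := by linarith [show 0 < σ2 * w ^ 2 / t ^ 2 by positivity]
  have hmoment := (hβ.scale (w / t)).abs_le_one_div_doubleFactorial (N := 2 * q) hw
    (by rw [hwu]; exact_mod_cast hq) hr₀.le hr₁ (by simp [hΛ.zero])
    (by rw [hΛ.one, ← hσr]; ring) (fun j hj => ?_) (2 * q) le_rfl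
  · rw [gaussMoment_eq_factorial_div_doubleFactorial]
    have hcoeff := (le_abs_self _).trans hmoment
    rw [div_pow, pow_mul w, hwu] at hcoeff
    calc ((2 * q)! : ℝ) * β (2 * q) * u ^ q
        = ((2 * q)! : ℝ) * (β (2 * q) * (u ^ q / t ^ (2 * q))) * t ^ (2 * q) := by field_simp
      _ ≤ ((2 * q)! : ℝ) * (1 / ((2 * q)‼ : ℝ)) * t ^ (2 * q) := by gcongr
      _ = ((2 * q)! : ℝ) / ((2 * q)‼ : ℝ) * t ^ (2 * q) := by ring
  · have hjw : (j : ℝ) + 3 ≤ w ^ 2 := by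
      have hjq : ((j + 3 : ℕ) : ℝ) ≤ (2 * q : ℕ) := by exact_mod_cast hj
      push_cast at hjq
      linarith
    rw [abs_mul, abs_of_pos (by positivity : 0 < (w / t) ^ (j + 2 + 1)), ← hσr]
    exact hΛ.abs_add_two_mul_pow_le ha hσ ht hw hr₀ hr₁ (by rw [hJ, hyr]) hjw

theorem CumulantBounds.tail_le {a σ2 J t M : ℝ} {Λ β : ℕ → ℝ} (hΛ : CumulantBounds a σ2 J Λ)
    (hβ : IsLogDerivCoeff Λ β) (ha : 3 ≤ a) (hσ : 0 < σ2) (hJ : 0 < J) (ht : 0 ≤ t)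
    (hM : M ≤ 1) (hMt : ∀ q : ℕ, M * t ^ (2 * q) ≤ ((2 * q)! : ℝ) * β (2 * q)) :
    M ≤ 2 * Real.exp (-(t ^ 2 / 2) / (σ2 + J ^ (1 / a) * t ^ (2 - 1 / a))) := by
  rcases ht.eq_or_lt with rfl | ht
  · simp only [ne_eq, OfNat.ofNat_ne_zero, not_false_eq_true, zero_pow, zero_div, neg_zero,
      Real.exp_zero]
    linarith
  rw [bernstein_denominator_eq hJ ht]
  set y := (t / J) ^ (1 / a) with hy_def
  have hy : 0 < y := by positivity
  set u := t ^ 2 / (σ2 + t ^ 2 / y) with hu_def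
  have hJt : J / t = y ^ (-a) := by
    rw [hy_def, ← Real.rpow_mul (by positivity), show 1 / a * -a = -1 by field_simp,
      Real.rpow_neg_one, inv_div]
  rw [show -(t ^ 2 / 2) / (σ2 + t ^ 2 / y) = -(u / 2) by rw [hu_def]; ring]
  refine le_two_mul_exp_neg_half_of_moment_le hM ?_ fun q hu₄ hq => ?_
  · have hvar : M * t ^ 2 ≤ σ2 := by
      have hcheb := hMt 1
      rw [← hΛ.one, ← hβ.two_mul_coeff_two hΛ.zero]
      simpa using hcheb
    rw [hu_def, ← mul_div_assoc, div_le_one (by positivity)]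
    linarith [show 0 < t ^ 2 / y by positivity]
  · refine le_of_mul_le_mul_right ?_ (show 0 < t ^ (2 * q) by positivity)
    calc M * u ^ q * t ^ (2 * q) = M * t ^ (2 * q) * u ^ q := by ring
      _ ≤ ((2 * q)! : ℝ) * β (2 * q) * u ^ q := by gcongr ?_ * _; exact hMt q
      _ ≤ gaussMoment q * t ^ (2 * q) :=
          hΛ.factorial_mul_moment_mul_pow_le hβ ha hσ ht hy hJt hu_def hu₄ hq

lemma two_mul_exp_le_of_threshold {a σ2 J δ t : ℝ} (ha : 0 < a) (hσ : 0 < σ2) (hJ : 0 < J)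
    (hδ₀ : 0 < δ) (hδ₁ : δ < 1)
    (ht : t = 2 * √σ2 * √(Real.log (4 / δ)) + 4 ^ a * J * Real.log (4 / δ) ^ a) :
    2 * Real.exp (-(t ^ 2 / 2) / (σ2 + J ^ (1 / a) * t ^ (2 - 1 / a))) ≤ δ := by
  set l := Real.log (4 / δ) with hl_def
  have hl : 0 < l := Real.log_pos (by rw [lt_div_iff₀ hδ₀]; linarith)
  have ht₀ : 0 < t := by rw [ht]; positivity
  rw [bernstein_denominator_eq hJ ht₀]
  set y := (t / J) ^ (1 / a) with hy_def
  have hy : 4 * l ≤ y := by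
    rw [hy_def, one_div, Real.le_rpow_inv_iff_of_pos (by positivity) (by positivity) ha,
      le_div_iff₀ hJ, Real.mul_rpow (by norm_num) hl.le, ht]
    linarith [show 0 ≤ 2 * √σ2 * √l by positivity]
  have hy₀ : 0 < y := by linarith
  have hσt : 4 * σ2 * l ≤ t ^ 2 := by
    calc 4 * σ2 * l = (2 * √σ2 * √l) ^ 2 := by
          rw [mul_pow, mul_pow, Real.sq_sqrt hσ.le, Real.sq_sqrt hl.le]
          ring
      _ ≤ t ^ 2 := by
          rw [ht]
          gcongr
          exact le_add_of_nonneg_right (by positivity)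
  have hyt : t ^ 2 / y * (4 * l) ≤ t ^ 2 := by
    rw [div_mul_eq_mul_div, div_le_iff₀ hy₀]
    gcongr
  have hexp : -(t ^ 2 / 2) / (σ2 + t ^ 2 / y) ≤ -l := by
    rw [div_le_iff₀ (by positivity)]
    linarith
  calc 2 * Real.exp (-(t ^ 2 / 2) / (σ2 + t ^ 2 / y)) ≤ 2 * Real.exp (-l) := by gcongr
    _ = δ / 2 := by
        rw [Real.exp_neg, hl_def, Real.exp_log (by positivity), inv_div]
        ring
    _ ≤ δ := by linarith

end CumulantTail

section TruncatedNorm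

variable {K : ℕ} {z : ℝ}

/-- The weighted `ℓ¹` norm `∑_{i<K} |f_i| z^i` of a power series truncated at degree `K`; it is
submultiplicative, which is how the recursion for the cumulants is controlled. -/
def truncNorm (K : ℕ) (z : ℝ) (f : PowerSeries ℝ) : ℝ :=
  ∑ i ∈ range K, |PowerSeries.coeff i f| * z ^ i

lemma truncNorm_nonneg (hz : 0 ≤ z) (f : PowerSeries ℝ) : 0 ≤ truncNorm K z f :=
  sum_nonneg fun _ _ => by positivity

lemma truncNorm_le_mul_of_coeff_le {f g : PowerSeries ℝ} {C : ℝ} (hz : 0 ≤ z)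
    (h : ∀ i < K, |PowerSeries.coeff i f| ≤ C * |PowerSeries.coeff i g|) :
    truncNorm K z f ≤ C * truncNorm K z g := by
  rw [truncNorm, truncNorm, mul_sum]
  refine sum_le_sum fun i hi => ?_
  rw [← mul_assoc]
  exact mul_le_mul_of_nonneg_right (h i (mem_range.1 hi)) (by positivity)

lemma truncNorm_le_succ (hz : 0 ≤ z) (f : PowerSeries ℝ) :
    truncNorm K z f ≤ truncNorm (K + 1) z f := by
  rw [truncNorm, truncNorm, sum_range_succ]
  exact le_add_of_nonneg_right (by positivity)

lemma truncNorm_add_le (hz : 0 ≤ z) (f g : PowerSeries ℝ) :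
    truncNorm K z (f + g) ≤ truncNorm K z f + truncNorm K z g := by
  rw [truncNorm, truncNorm, truncNorm, ← sum_add_distrib]
  refine sum_le_sum fun i _ => ?_
  rw [map_add, ← add_mul]
  exact mul_le_mul_of_nonneg_right (abs_add_le _ _) (by positivity)

lemma truncNorm_neg (f : PowerSeries ℝ) : truncNorm K z (-f) = truncNorm K z f := by
  simp only [truncNorm, map_neg, abs_neg]

lemma truncNorm_C_mul (a : ℝ) (f : PowerSeries ℝ) :
    truncNorm K z (PowerSeries.C a * f) = |a| * truncNorm K z f := by
  simp only [truncNorm, PowerSeries.coeff_C_mul, abs_mul, mul_sum, mul_assoc]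

lemma truncNorm_X_mul (f : PowerSeries ℝ) :
    truncNorm (K + 1) z (PowerSeries.X * f) = z * truncNorm K z f := by
  simp only [truncNorm, sum_range_succ', PowerSeries.coeff_succ_X_mul,
    PowerSeries.coeff_zero_X_mul, abs_zero, zero_mul, add_zero, mul_sum]
  exact sum_congr rfl fun i _ => by ring

lemma truncNorm_one_le : truncNorm K z 1 ≤ 1 := by
  rcases K with _ | K
  · simp [truncNorm]
  · simp [truncNorm, sum_range_succ', PowerSeries.coeff_one]

lemma sum_antidiagonal_mul_le (K : ℕ) {f g : ℕ → ℝ} (hf : ∀ i, 0 ≤ f i) (hg : ∀ i, 0 ≤ g i) :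
    ∑ i ∈ range K, ∑ p ∈ antidiagonal i, f p.1 * g p.2 ≤
      (∑ i ∈ range K, f i) * ∑ i ∈ range K, g i := by
  simp only [Finset.Nat.sum_antidiagonal_eq_sum_range_succ fun a b => f a * g b]
  rw [sum_range_diag_flip K fun a b => f a * g b, sum_mul_sum]
  refine sum_le_sum fun i _ => ?_
  exact sum_le_sum_of_subset_of_nonneg (range_mono (Nat.sub_le K i))
    fun _ _ _ => mul_nonneg (hf _) (hg _)

lemma truncNorm_mul_le (hz : 0 ≤ z) (f g : PowerSeries ℝ) :
    truncNorm K z (f * g) ≤ truncNorm K z f * truncNorm K z g := by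
  refine le_trans (sum_le_sum fun i _ => ?_) (sum_antidiagonal_mul_le K
    (f := fun i => |PowerSeries.coeff i f| * z ^ i) (g := fun i => |PowerSeries.coeff i g| * z ^ i)
    (fun i => by positivity) fun i => by positivity)
  calc |PowerSeries.coeff i (f * g)| * z ^ i
      ≤ (∑ p ∈ antidiagonal i, |PowerSeries.coeff p.1 f * PowerSeries.coeff p.2 g|) * z ^ i := by
        rw [PowerSeries.coeff_mul]
        exact mul_le_mul_of_nonneg_right (abs_sum_le_sum_abs _ _) (by positivity)
    _ = _ := by
        rw [sum_mul]
        refine sum_congr rfl fun p hp => ?_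
        rw [abs_mul, ← mem_antidiagonal.1 hp, pow_add, mul_mul_mul_comm]

lemma truncNorm_succ_mul_le {f : PowerSeries ℝ} (hz : 0 ≤ z) (hf : PowerSeries.coeff 0 f = 0)
    (g : PowerSeries ℝ) :
    truncNorm (K + 1) z (f * g) ≤ truncNorm (K + 1) z f * truncNorm K z g := by
  obtain ⟨h, rfl⟩ := PowerSeries.X_dvd_iff.2
    (PowerSeries.coeff_zero_eq_constantCoeff_apply f ▸ hf)
  rw [mul_assoc, truncNorm_X_mul, truncNorm_X_mul, mul_assoc]
  exact mul_le_mul_of_nonneg_left (truncNorm_mul_le hz h g) hz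

lemma truncNorm_inv_mul_le {r : PowerSeries ℝ} {δ : ℝ} (hz : 0 ≤ z)
    (hr : PowerSeries.coeff 0 r = 1) (h : truncNorm K z (r - 1) ≤ δ) :
    truncNorm K z r⁻¹ * (1 - δ) ≤ 1 := by
  have hinv : r⁻¹ = 1 + -(r - 1) * r⁻¹ := by
    rw [PowerSeries.coeff_zero_eq_constantCoeff_apply] at hr
    linear_combination PowerSeries.mul_inv_cancel r (hr ▸ one_ne_zero)
  have hle : truncNorm K z r⁻¹ ≤ 1 + δ * truncNorm K z r⁻¹ :=
    calc truncNorm K z r⁻¹ = truncNorm K z (1 + -(r - 1) * r⁻¹) := by rw [← hinv]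
      _ ≤ truncNorm K z 1 + truncNorm K z (-(r - 1)) * truncNorm K z r⁻¹ :=
        (truncNorm_add_le hz _ _).trans (add_le_add_right (truncNorm_mul_le hz _ _) _)
      _ ≤ 1 + δ * truncNorm K z r⁻¹ := by
        rw [truncNorm_neg]
        exact add_le_add truncNorm_one_le
          (mul_le_mul_of_nonneg_right h (truncNorm_nonneg hz _))
  linarith

lemma abs_coeff_mul_pow_le_truncNorm {i : ℕ} (hz : 0 ≤ z) (hi : i < K) (f : PowerSeries ℝ) :
    |PowerSeries.coeff i f| * z ^ i ≤ truncNorm K z f :=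
  single_le_sum (f := fun i => |PowerSeries.coeff i f| * z ^ i) (fun _ _ => by positivity)
    (mem_range.2 hi)

lemma abs_coeff_derivative_mul_le (hz : 0 ≤ z) (k : ℕ) (f g : PowerSeries ℝ) :
    |PowerSeries.coeff k (PowerSeries.derivative ℝ f * g)| * z ^ (k + 1) ≤
      (k + 1) * (truncNorm (k + 2) z f * truncNorm (k + 1) z g) := by
  have hderiv : truncNorm (k + 1) z (PowerSeries.derivative ℝ f) * z ≤
      (k + 1) * truncNorm (k + 2) z f := by
    rw [truncNorm, truncNorm, sum_range_succ' _ (k + 1), mul_add, mul_sum, sum_mul]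
    refine le_add_of_le_of_nonneg (sum_le_sum fun i hi => ?_) (by positivity)
    have hik : (i : ℝ) + 1 ≤ k + 1 := by exact_mod_cast mem_range.1 hi
    calc |PowerSeries.coeff i (PowerSeries.derivative ℝ f)| * z ^ i * z
        = (i + 1) * (|PowerSeries.coeff (i + 1) f| * z ^ (i + 1)) := by
          rw [PowerSeries.coeff_derivative, abs_mul, abs_of_nonneg (by positivity : (0:ℝ) ≤ i + 1)]
          ring
      _ ≤ _ := mul_le_mul_of_nonneg_right hik (by positivity)
  calc |PowerSeries.coeff k (PowerSeries.derivative ℝ f * g)| * z ^ (k + 1)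
      = |PowerSeries.coeff k (PowerSeries.derivative ℝ f * g)| * z ^ k * z := by ring
    _ ≤ truncNorm (k + 1) z (PowerSeries.derivative ℝ f) * truncNorm (k + 1) z g * z :=
        mul_le_mul_of_nonneg_right ((abs_coeff_mul_pow_le_truncNorm hz k.lt_succ_self _).trans
          (truncNorm_mul_le hz _ _)) hz
    _ = truncNorm (k + 1) z (PowerSeries.derivative ℝ f) * z * truncNorm (k + 1) z g := by ring
    _ ≤ (k + 1) * truncNorm (k + 2) z f * truncNorm (k + 1) z g :=
        mul_le_mul_of_nonneg_right hderiv (truncNorm_nonneg hz _)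
    _ = _ := mul_assoc _ _ _

end TruncatedNorm

section Exponential

open scoped Nat

variable {K : ℕ} {b z : ℝ}

lemma coeff_rescale_exp (b : ℝ) (i : ℕ) :
    PowerSeries.coeff i (PowerSeries.rescale b (PowerSeries.exp ℝ)) = b ^ i / (i ! : ℝ) := by
  rw [PowerSeries.coeff_rescale, PowerSeries.coeff_exp]
  simp [div_eq_mul_inv]

/-- The power series of `e^{bs} - 1` in the variable `s`. -/
def expSubOne (b : ℝ) : PowerSeries ℝ := PowerSeries.rescale b (PowerSeries.exp ℝ) - 1

/-- The power series of `e^{bs} - 1 - bs` in the variable `s`. -/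
def expSubOneSubId (b : ℝ) : PowerSeries ℝ :=
  expSubOne b - PowerSeries.C b * PowerSeries.X

lemma coeff_zero_expSubOne (b : ℝ) : PowerSeries.coeff 0 (expSubOne b) = 0 := by
  rw [expSubOne, map_sub, coeff_rescale_exp]
  simp

lemma coeff_succ_expSubOne (b : ℝ) (i : ℕ) :
    PowerSeries.coeff (i + 1) (expSubOne b) = b ^ (i + 1) / ((i + 1)! : ℝ) := by
  rw [expSubOne, map_sub, coeff_rescale_exp]
  simp [PowerSeries.coeff_one]

lemma coeff_expSubOne_nonneg (hb : 0 ≤ b) (i : ℕ) : 0 ≤ PowerSeries.coeff i (expSubOne b) := by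
  rcases i with _ | i
  · rw [coeff_zero_expSubOne]
  · rw [coeff_succ_expSubOne]; positivity

lemma coeff_zero_expSubOneSubId (b : ℝ) : PowerSeries.coeff 0 (expSubOneSubId b) = 0 := by
  rw [expSubOneSubId, map_sub, coeff_zero_expSubOne]
  simp

lemma coeff_one_expSubOneSubId (b : ℝ) : PowerSeries.coeff 1 (expSubOneSubId b) = 0 := by
  simp [expSubOneSubId, coeff_succ_expSubOne b 0]

lemma coeff_add_two_expSubOneSubId (b : ℝ) (i : ℕ) :
    PowerSeries.coeff (i + 2) (expSubOneSubId b) = b ^ (i + 2) / ((i + 2)! : ℝ) := by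
  rw [expSubOneSubId, map_sub, coeff_succ_expSubOne, PowerSeries.coeff_C_mul, PowerSeries.coeff_X]
  simp

lemma truncNorm_expSubOneSubId_le (hz : 0 ≤ z) (hb : 0 ≤ b) (hbz : b * z ≤ 1) :
    truncNorm K z (expSubOneSubId b) ≤ (b * z) ^ 2 := by
  have hx : 0 ≤ b * z := mul_nonneg hb hz
  have htail : ∑ i ∈ range K, (b * z) ^ (i + 2) / ((i + 2)! : ℝ) ≤ (b * z) ^ 2 := by
    have hsum := Real.sum_le_exp_of_nonneg hx (K + 2)
    have hexp := (abs_le.1 (Real.abs_exp_sub_one_sub_id_le (by rwa [abs_of_nonneg hx]))).2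
    rw [sum_range_succ', sum_range_succ'] at hsum
    norm_num at hsum
    linarith
  calc truncNorm K z (expSubOneSubId b)
      ≤ truncNorm (K + 2) z (expSubOneSubId b) :=
        (truncNorm_le_succ hz _).trans (truncNorm_le_succ hz _)
    _ = ∑ i ∈ range K, (b * z) ^ (i + 2) / ((i + 2)! : ℝ) := by
        simp only [truncNorm, sum_range_succ', coeff_zero_expSubOneSubId,
          coeff_one_expSubOneSubId, zero_add, abs_zero, zero_mul, add_zero]
        refine sum_congr rfl fun i _ => ?_
        rw [coeff_add_two_expSubOneSubId, abs_of_nonneg (by positivity), mul_pow]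
        ring
    _ ≤ (b * z) ^ 2 := htail

lemma truncNorm_expSubOne_le (hz : 0 ≤ z) (hb : 0 ≤ b) (hbz : b * z ≤ 1) :
    truncNorm K z (expSubOne b) ≤ b * z + (b * z) ^ 2 := by
  have hX : truncNorm K z (PowerSeries.C b * PowerSeries.X) ≤ b * z := by
    rw [truncNorm_C_mul, abs_of_nonneg hb]
    refine mul_le_mul_of_nonneg_left ((truncNorm_le_succ hz _).trans ?_) hb
    rw [← mul_one PowerSeries.X, truncNorm_X_mul]
    exact mul_le_of_le_one_right hz truncNorm_one_le
  calc truncNorm K z (expSubOne b)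
      = truncNorm K z (PowerSeries.C b * PowerSeries.X + expSubOneSubId b) := by
        rw [expSubOneSubId, add_sub_cancel]
    _ ≤ b * z + (b * z) ^ 2 := (truncNorm_add_le hz _ _).trans
        (add_le_add hX (truncNorm_expSubOneSubId_le hz hb hbz))

end Exponential

section MajorantRecursion

variable {K : ℕ} {q C b z : ℝ} {u : PowerSeries ℝ}

/- Throughout, the radius `z` is chosen so that `4 C b z = 1 - q`; the constant `2/5` is then stable
under one step of the recursion. -/

lemma truncNorm_majorant_le (hq : 0 ≤ q) (hC : 1 ≤ C) (hb : 0 ≤ b) (hz : 0 ≤ z)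
    (hbz : 4 * C * (b * z) = 1 - q) (hu : truncNorm K z u ≤ 2 / 5 * q) :
    truncNorm (K + 1) z (expSubOneSubId b + expSubOne b * u) ≤ (1 - q) / (10 * C) := by
  set β := b * z with hβ
  have hβ₀ : 0 ≤ β := mul_nonneg hb hz
  have hβq : 4 * β ≤ 1 - q := by nlinarith
  have hβ₁ : β ≤ 1 := by linarith
  have hfactor : β + (1 + β) * (2 / 5 * q) ≤ 2 / 5 := by nlinarith
  calc truncNorm (K + 1) z (expSubOneSubId b + expSubOne b * u)
      ≤ β ^ 2 + (β + β ^ 2) * (2 / 5 * q) := by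
        refine (truncNorm_add_le hz _ _).trans (add_le_add
          (truncNorm_expSubOneSubId_le hz hb hβ₁)
          ((truncNorm_succ_mul_le hz (coeff_zero_expSubOne b) u).trans ?_))
        exact mul_le_mul (truncNorm_expSubOne_le hz hb hβ₁) hu (truncNorm_nonneg hz _)
          (by positivity)
    _ = β * (β + (1 + β) * (2 / 5 * q)) := by ring
    _ ≤ β * (2 / 5) := mul_le_mul_of_nonneg_left hfactor hβ₀
    _ = (1 - q) / (10 * C) := by rw [← hbz]; field_simp; ring

lemma truncNorm_majorant_step_le {w : PowerSeries ℝ} (hq : 0 ≤ q) (hC : 1 ≤ C) (hb : 0 ≤ b)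
    (hz : 0 ≤ z) (hbz : 4 * C * (b * z) = 1 - q) (hu : truncNorm K z u ≤ 2 / 5 * q)
    (hw : truncNorm K z w * (1 - (1 - q) / 10) ≤ 1) :
    truncNorm K z (w * (PowerSeries.C q * u + PowerSeries.C (q * C) * (expSubOne b * (1 + u)))) ≤
      2 / 5 * q := by
  set β := b * z with hβ
  have hβ₀ : 0 ≤ β := mul_nonneg hb hz
  have hβq : 4 * β ≤ 1 - q := by nlinarith
  have hβ₁ : β ≤ 1 := by linarith
  have hsource : truncNorm K z (expSubOne b * (1 + u)) ≤ (β + β ^ 2) * (1 + 2 / 5 * q) :=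
    (truncNorm_mul_le hz _ _).trans (mul_le_mul (truncNorm_expSubOne_le hz hb hβ₁)
      ((truncNorm_add_le hz _ _).trans (add_le_add truncNorm_one_le hu))
      (truncNorm_nonneg hz _) (by positivity))
  have hstable : 2 / 5 * q + C * ((β + β ^ 2) * (1 + 2 / 5 * q)) ≤
      2 / 5 * (1 - (1 - q) / 10) := by
    have hCβ : C * ((β + β ^ 2) * (1 + 2 / 5 * q)) =
        (1 - q) / 4 * ((1 + β) * (1 + 2 / 5 * q)) := by rw [← hbz]; ring
    have hprod : (1 + β) * (1 + 2 / 5 * q) ≤ 36 / 25 := by nlinarith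
    nlinarith
  have hsum : truncNorm K z (PowerSeries.C q * u +
      PowerSeries.C (q * C) * (expSubOne b * (1 + u))) ≤ q * (2 / 5 * (1 - (1 - q) / 10)) := by
    refine (truncNorm_add_le hz _ _).trans ?_
    rw [truncNorm_C_mul, truncNorm_C_mul, abs_of_nonneg hq, abs_of_nonneg (by positivity),
      mul_assoc, ← mul_add]
    refine mul_le_mul_of_nonneg_left (le_trans ?_ hstable) hq
    gcongr
  calc truncNorm K z (w * (PowerSeries.C q * u + PowerSeries.C (q * C) * (expSubOne b * (1 + u))))
      ≤ truncNorm K z w * (q * (2 / 5 * (1 - (1 - q) / 10))) := (truncNorm_mul_le hz _ _).trans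
        (mul_le_mul_of_nonneg_left hsum (truncNorm_nonneg hz _))
    _ = 2 / 5 * q * (truncNorm K z w * (1 - (1 - q) / 10)) := by ring
    _ ≤ 2 / 5 * q := mul_le_of_le_one_right (by positivity) hw

end MajorantRecursion

section Moments

variable {Y : Type*} [MeasurableSpace Y] {μ : Measure Y} {f g : Y → ℝ}

/-- A measurable function all of whose moments are finite. These functions form an algebra that is
stable under a Markov kernel leaving `μ` invariant. -/
structure HasAllMoments (f : Y → ℝ) (μ : Measure Y) : Prop where
  measurable : Measurable f
  memLp : ∀ p : ℕ, MemLp f p μ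

namespace HasAllMoments

lemma integrable (hf : HasAllMoments f μ) : Integrable f μ :=
  memLp_one_iff_integrable.1 (by simpa using hf.memLp 1)

lemma of_integrable_pow (hf : Measurable f)
    (h : ∀ p ≠ 0, Integrable (fun x => |f x| ^ p) μ) : HasAllMoments f μ := by
  refine ⟨hf, fun p => ?_⟩
  rcases eq_or_ne p 0 with rfl | hp
  · rw [Nat.cast_zero]
    exact memLp_zero_iff_aestronglyMeasurable.2 hf.aestronglyMeasurable
  · rw [← integrable_norm_rpow_iff hf.aestronglyMeasurable (by exact_mod_cast hp) (by simp)]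
    simpa using h p hp

lemma const [IsFiniteMeasure μ] (a : ℝ) : HasAllMoments (fun _ => a) μ :=
  ⟨measurable_const, fun _ => memLp_const a⟩

lemma add (hf : HasAllMoments f μ) (hg : HasAllMoments g μ) :
    HasAllMoments (fun x => f x + g x) μ :=
  ⟨hf.measurable.add hg.measurable, fun p => (hf.memLp p).add (hg.memLp p)⟩

lemma sub (hf : HasAllMoments f μ) (hg : HasAllMoments g μ) :
    HasAllMoments (fun x => f x - g x) μ :=
  ⟨hf.measurable.sub hg.measurable, fun p => (hf.memLp p).sub (hg.memLp p)⟩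

lemma mul (hf : HasAllMoments f μ) (hg : HasAllMoments g μ) :
    HasAllMoments (fun x => f x * g x) μ := by
  refine ⟨hf.measurable.mul hg.measurable, fun p => ?_⟩
  have hholder : ENNReal.HolderTriple ((2 * p : ℕ) : ℝ≥0∞) ((2 * p : ℕ) : ℝ≥0∞) p := by
    refine ⟨?_⟩
    rw [Nat.cast_mul, ENNReal.mul_inv (by simp) (by simp), ← add_mul, Nat.cast_ofNat,
      ENNReal.inv_two_add_inv_two, one_mul]
  exact (hg.memLp (2 * p)).mul' (hf.memLp (2 * p))

lemma abs (hf : HasAllMoments f μ) : HasAllMoments (fun x => |f x|) μ :=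
  ⟨hf.measurable.abs, fun p => (hf.memLp p).abs⟩

lemma const_mul (a : ℝ) (hf : HasAllMoments f μ) : HasAllMoments (fun x => a * f x) μ :=
  ⟨hf.measurable.const_mul a, fun p => (hf.memLp p).const_mul a⟩

lemma sum [IsFiniteMeasure μ] {ι : Type*} (s : Finset ι) {F : ι → Y → ℝ}
    (h : ∀ i ∈ s, HasAllMoments (F i) μ) : HasAllMoments (fun x => ∑ i ∈ s, F i x) μ :=
  ⟨Finset.measurable_sum s fun i hi => (h i hi).measurable,
    fun p => memLp_finsetSum s fun i hi => (h i hi).memLp p⟩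

lemma pow [IsFiniteMeasure μ] (hf : HasAllMoments f μ) :
    ∀ n : ℕ, HasAllMoments (fun x => f x ^ n) μ
  | 0 => by simpa only [pow_zero] using const 1
  | n + 1 => by simpa only [pow_succ] using (pow hf n).mul hf

lemma comp {Ω : Type*} [MeasurableSpace Ω] {P : Measure Ω} {φ : Ω → Y}
    (hf : HasAllMoments f μ) (hφ : Measurable φ) (hmap : P.map φ = μ) :
    HasAllMoments (fun ω => f (φ ω)) P :=
  ⟨hf.measurable.comp hφ, fun p => (hf.memLp p).comp_measurePreserving ⟨hφ, hmap⟩⟩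

end HasAllMoments

end Moments

section InvariantMeasure

variable {X : Type*} [MeasurableSpace X] {Q : Kernel X X} {π : Measure X} {f : X → ℝ}

lemma ae_ae_of_invariant (hQ : Q.Invariant π) {p : X → Prop} (h : ∀ᵐ x ∂π, p x) :
    ∀ᵐ x ∂π, ∀ᵐ y ∂(Q x), p y :=
  Measure.ae_ae_of_ae_comp (show ∀ᵐ x ∂(Q ∘ₘ π), p x from hQ.symm ▸ h)

lemma ae_integrable_of_invariant (hQ : Q.Invariant π) (hf : Integrable f π) :
    ∀ᵐ x ∂π, Integrable f (Q x) :=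
  Measure.ae_integrable_of_integrable_comp (show Integrable f (Q ∘ₘ π) from hQ.symm ▸ hf)

lemma integral_integral_of_invariant (hQ : Q.Invariant π) (hf : Integrable f π) :
    ∫ x, (∫ y, f y ∂(Q x)) ∂π = ∫ y, f y ∂π := by
  have hcomp : (Q.comp (Kernel.const Unit π)) () = π := by
    rw [Kernel.comp_apply, Kernel.const_apply, hQ]
  have hint : Integrable f ((Q.comp (Kernel.const Unit π)) ()) := by rwa [hcomp]
  have key := Kernel.integral_comp hint
  rw [hcomp, Kernel.const_apply] at key
  exact key.symm

lemma HasAllMoments.integral_kernel [IsMarkovKernel Q] (hQ : Q.Invariant π)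
    (hf : HasAllMoments f π) : HasAllMoments (fun x => ∫ y, f y ∂(Q x)) π := by
  have hmeas : Measurable fun x => ∫ y, f y ∂(Q x) :=
    (hf.measurable.stronglyMeasurable.integral_kernel (κ := Q)).measurable
  refine HasAllMoments.of_integrable_pow hmeas fun p hp => ?_
  have hpow : Integrable (fun x => |f x| ^ p) π := (hf.memLp p).integrable_norm_pow hp
  have hQpow : Integrable (fun x => ∫ y, |f y| ^ p ∂(Q x)) π := by
    simpa using Measure.integrable_integral_norm_of_integrable_comp
      (show Integrable (fun x => |f x| ^ p) (Q ∘ₘ π) from hQ.symm ▸ hpow)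
  refine hQpow.mono' (hmeas.abs.pow_const p).aestronglyMeasurable ?_
  filter_upwards [ae_integrable_of_invariant hQ hf.integrable,
    ae_integrable_of_invariant hQ hpow] with x hx hxpow
  calc ‖|∫ y, f y ∂(Q x)| ^ p‖ = |∫ y, f y ∂(Q x)| ^ p := by simp
    _ ≤ (∫ y, |f y| ∂(Q x)) ^ p := by gcongr; exact abs_integral_le_integral_abs
    _ ≤ ∫ y, |f y| ^ p ∂(Q x) := (convexOn_pow p).map_integral_le (continuousOn_pow p)
        isClosed_Ici (ae_of_all _ fun y => abs_nonneg (f y)) hx.abs hxpow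

instance kIter_isMarkovKernel (Q : Kernel X X) [IsMarkovKernel Q] (n : ℕ) :
    IsMarkovKernel (kIter Q n) := by
  induction n with
  | zero => rw [kIter]; infer_instance
  | succ n ih => rw [kIter]; infer_instance

lemma kIter_succ_eq_comp_kIter (Q : Kernel X X) (n : ℕ) : kIter Q (n + 1) = Q.comp (kIter Q n) := by
  induction n with
  | zero => simp [kIter]
  | succ n ih => rw [kIter, ih, Kernel.comp_assoc, ← ih]; rfl

lemma kIter_invariant [IsMarkovKernel Q] (hQ : Q.Invariant π) : ∀ n, (kIter Q n).Invariant π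
  | 0 => by rw [kIter, Kernel.Invariant]; exact Measure.id_comp
  | n + 1 => (kIter_invariant hQ n).comp hQ

lemma ae_integral_integral_kIter [IsMarkovKernel Q] (hQ : Q.Invariant π) (hf : Integrable f π)
    (s : ℕ) :
    ∀ᵐ x ∂π, ∫ z, (∫ y, f y ∂(Q z)) ∂(kIter Q s x) = ∫ y, f y ∂(kIter Q (s + 1) x) := by
  filter_upwards [ae_integrable_of_invariant (kIter_invariant hQ (s + 1)) hf] with x hx
  rw [kIter_succ_eq_comp_kIter] at hx ⊢
  rw [Kernel.integral_comp hx]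

end InvariantMeasure

section CoefficientMoments

variable {Y : Type*} [MeasurableSpace Y] {μ : Measure Y} {T U : Y → PowerSeries ℝ}

/-- A random formal power series all of whose coefficients have finite moments. -/
def HasCoeffMoments (T : Y → PowerSeries ℝ) (μ : Measure Y) : Prop :=
  ∀ i, HasAllMoments (fun x => PowerSeries.coeff i (T x)) μ

/-- The coefficientwise integral of a random formal power series. -/
def coeffIntegral (μ : Measure Y) (T : Y → PowerSeries ℝ) : PowerSeries ℝ :=
  PowerSeries.mk fun i => ∫ y, PowerSeries.coeff i (T y) ∂μ

lemma coeff_coeffIntegral (μ : Measure Y) (T : Y → PowerSeries ℝ) (i : ℕ) :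
    PowerSeries.coeff i (coeffIntegral μ T) = ∫ y, PowerSeries.coeff i (T y) ∂μ :=
  PowerSeries.coeff_mk i _

lemma coeffIntegral_const_mul (r : PowerSeries ℝ) (hT : HasCoeffMoments T μ) :
    coeffIntegral μ (fun x => r * T x) = r * coeffIntegral μ T := by
  ext i
  simp only [coeff_coeffIntegral, PowerSeries.coeff_mul]
  rw [integral_finsetSum _ fun p _ => (hT p.2).integrable.const_mul _]
  simp only [integral_const_mul]

namespace HasCoeffMoments

lemma const [IsFiniteMeasure μ] (r : PowerSeries ℝ) : HasCoeffMoments (fun _ => r) μ :=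
  fun _ => HasAllMoments.const _

lemma add (hT : HasCoeffMoments T μ) (hU : HasCoeffMoments U μ) :
    HasCoeffMoments (fun x => T x + U x) μ := fun i => by
  simpa only [map_add] using (hT i).add (hU i)

lemma sub (hT : HasCoeffMoments T μ) (hU : HasCoeffMoments U μ) :
    HasCoeffMoments (fun x => T x - U x) μ := fun i => by
  simpa only [map_sub] using (hT i).sub (hU i)

lemma mul [IsFiniteMeasure μ] (hT : HasCoeffMoments T μ) (hU : HasCoeffMoments U μ) :
    HasCoeffMoments (fun x => T x * U x) μ := fun i => by
  simpa only [PowerSeries.coeff_mul] using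
    HasAllMoments.sum (antidiagonal i) fun p _ => (hT p.1).mul (hU p.2)

lemma rescale_exp [IsFiniteMeasure μ] {f : Y → ℝ} (hf : HasAllMoments f μ) :
    HasCoeffMoments (fun x => PowerSeries.rescale (f x) (PowerSeries.exp ℝ)) μ := fun i => by
  simpa only [coeff_rescale_exp, div_eq_inv_mul] using (hf.pow i).const_mul _

lemma C_mul {f : Y → ℝ} (hf : HasAllMoments f μ) (r : PowerSeries ℝ) :
    HasCoeffMoments (fun x => PowerSeries.C (f x) * r) μ := fun i => by
  simp only [PowerSeries.coeff_C_mul]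
  simpa only [mul_comm] using hf.const_mul (PowerSeries.coeff i r)

lemma expSubOne [IsFiniteMeasure μ] {f : Y → ℝ} (hf : HasAllMoments f μ) :
    HasCoeffMoments (fun x => expSubOne (f x)) μ :=
  (rescale_exp hf).sub (const 1)

lemma expSubOneSubId [IsFiniteMeasure μ] {f : Y → ℝ} (hf : HasAllMoments f μ) :
    HasCoeffMoments (fun x => expSubOneSubId (f x)) μ :=
  (expSubOne hf).sub (C_mul hf PowerSeries.X)

lemma comp {Ω : Type*} [MeasurableSpace Ω] {P : Measure Ω} {φ : Ω → Y}
    (hT : HasCoeffMoments T μ) (hφ : Measurable φ) (hmap : P.map φ = μ) :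
    HasCoeffMoments (fun ω => T (φ ω)) P :=
  fun i => (hT i).comp hφ hmap

lemma coeffIntegral_kernel {Q : Kernel Y Y} [IsMarkovKernel Q] (hQ : Q.Invariant μ)
    (hT : HasCoeffMoments T μ) : HasCoeffMoments (fun x => coeffIntegral (Q x) T) μ := fun i => by
  simpa only [coeff_coeffIntegral] using (hT i).integral_kernel hQ

end HasCoeffMoments

lemma coeffIntegral_add (hT : HasCoeffMoments T μ) (hU : HasCoeffMoments U μ) :
    coeffIntegral μ (fun x => T x + U x) = coeffIntegral μ T + coeffIntegral μ U := by
  ext i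
  simp only [coeff_coeffIntegral, map_add]
  exact integral_add (hT i).integrable (hU i).integrable

lemma coeffIntegral_sub (hT : HasCoeffMoments T μ) (hU : HasCoeffMoments U μ) :
    coeffIntegral μ (fun x => T x - U x) = coeffIntegral μ T - coeffIntegral μ U := by
  ext i
  simp only [coeff_coeffIntegral, map_sub]
  exact integral_sub (hT i).integrable (hU i).integrable

lemma coeffIntegral_const [IsProbabilityMeasure μ] (r : PowerSeries ℝ) :
    coeffIntegral μ (fun _ => r) = r := by
  ext i
  simp [coeff_coeffIntegral]

lemma coeffIntegral_coeffIntegral_of_invariant {Q : Kernel Y Y} (hQ : Q.Invariant μ)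
    (hT : HasCoeffMoments T μ) :
    coeffIntegral μ (fun x => coeffIntegral (Q x) T) = coeffIntegral μ T := by
  ext i
  simp only [coeff_coeffIntegral]
  exact integral_integral_of_invariant hQ (hT i).integrable

end CoefficientMoments

section Corrector

variable {X : Type*}

/-- The formal series `e^{s h} (1 + U)` in the variable `s`. -/
def tiltedSeries (h : X → ℝ) (U : X → PowerSeries ℝ) (x : X) : PowerSeries ℝ :=
  PowerSeries.rescale (h x) (PowerSeries.exp ℝ) * (1 + U x)

lemma coeff_zero_tiltedSeries {h : X → ℝ} {U : X → PowerSeries ℝ}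
    (hU : ∀ x, PowerSeries.coeff 0 (U x) = 0) (x : X) :
    PowerSeries.coeff 0 (tiltedSeries h U x) = 1 := by
  simp [tiltedSeries, PowerSeries.coeff_mul, hU x]

lemma rescale_sum_succ_mul_tiltedSeries (h : X → ℝ) (x : ℕ → X) (n : ℕ) (U : X → PowerSeries ℝ) :
    PowerSeries.rescale (∑ j ∈ range n, h (x j)) (PowerSeries.exp ℝ) * tiltedSeries h U (x n) =
      PowerSeries.rescale (∑ j ∈ range (n + 1), h (x j)) (PowerSeries.exp ℝ) *
        (1 + U (x n)) := by
  rw [sum_range_succ, ← PowerSeries.exp_mul_exp_eq_exp_add, tiltedSeries, mul_assoc]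

variable [MeasurableSpace X]

/-- The corrector `U_m`, for which `1 + U_m` is the `m`-fold image of the constant function `1`
under `F ↦ Q (e^{s h} F)`, each image being normalised by its `π`-mean. -/
def corrector (Q : Kernel X X) (π : Measure X) (h : X → ℝ) : ℕ → X → PowerSeries ℝ
  | 0 => fun _ => 0
  | m + 1 => fun x => (coeffIntegral π (tiltedSeries h (corrector Q π h m)))⁻¹ *
      (coeffIntegral (Q x) (tiltedSeries h (corrector Q π h m)) -
        coeffIntegral π (tiltedSeries h (corrector Q π h m)))

/-- The normalising series `r_m = π (e^{s h} (1 + U_m))`. -/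
def normalizer (Q : Kernel X X) (π : Measure X) (h : X → ℝ) (m : ℕ) : PowerSeries ℝ :=
  coeffIntegral π (tiltedSeries h (corrector Q π h m))

variable {Q : Kernel X X} [IsMarkovKernel Q] {π : Measure X} [IsProbabilityMeasure π] {h : X → ℝ}

lemma coeff_zero_corrector (m : ℕ) (x : X) :
    PowerSeries.coeff 0 (corrector Q π h m x) = 0 := by
  induction m generalizing x with
  | zero => simp [corrector]
  | succ m ih =>
    simp [corrector, PowerSeries.coeff_mul, coeff_coeffIntegral, coeff_zero_tiltedSeries ih]

lemma coeff_zero_normalizer (m : ℕ) : PowerSeries.coeff 0 (normalizer Q π h m) = 1 := by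
  simp [normalizer, coeff_coeffIntegral, coeff_zero_tiltedSeries (coeff_zero_corrector m)]

lemma normalizer_mul_inv (m : ℕ) : normalizer Q π h m * (normalizer Q π h m)⁻¹ = 1 := by
  refine PowerSeries.mul_inv_cancel _ ?_
  rw [← PowerSeries.coeff_zero_eq_constantCoeff_apply, coeff_zero_normalizer]
  exact one_ne_zero

lemma coeffIntegral_tiltedSeries_corrector (m : ℕ) (x : X) :
    coeffIntegral (Q x) (tiltedSeries h (corrector Q π h m)) =
      normalizer Q π h m * (1 + corrector Q π h (m + 1) x) := by
  change _ = normalizer Q π h m * (1 + (normalizer Q π h m)⁻¹ *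
    (coeffIntegral (Q x) (tiltedSeries h (corrector Q π h m)) - normalizer Q π h m))
  rw [mul_add, ← mul_assoc, normalizer_mul_inv, mul_one, one_mul, add_sub_cancel]

lemma HasCoeffMoments.tiltedSeries (hh : HasAllMoments h π) {U : X → PowerSeries ℝ}
    (hU : HasCoeffMoments U π) : HasCoeffMoments (tiltedSeries h U) π :=
  (HasCoeffMoments.rescale_exp hh).mul ((HasCoeffMoments.const 1).add hU)

lemma hasCoeffMoments_corrector (hQ : Q.Invariant π) (hh : HasAllMoments h π) :
    ∀ m, HasCoeffMoments (corrector Q π h m) π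
  | 0 => HasCoeffMoments.const 0
  | m + 1 =>
    let hT := (hasCoeffMoments_corrector hQ hh m).tiltedSeries hh
    (HasCoeffMoments.const _).mul ((hT.coeffIntegral_kernel hQ).sub (HasCoeffMoments.const _))

lemma hasCoeffMoments_tiltedSeries_corrector (hQ : Q.Invariant π) (hh : HasAllMoments h π)
    (m : ℕ) : HasCoeffMoments (tiltedSeries h (corrector Q π h m)) π :=
  (hasCoeffMoments_corrector hQ hh m).tiltedSeries hh

lemma coeffIntegral_corrector (hQ : Q.Invariant π) (hh : HasAllMoments h π) :
    ∀ m, coeffIntegral π (corrector Q π h m) = 0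
  | 0 => coeffIntegral_const 0
  | m + 1 => by
    have hT := hasCoeffMoments_tiltedSeries_corrector hQ hh m
    have hQT := hT.coeffIntegral_kernel hQ
    have hconst := HasCoeffMoments.const (μ := π) (normalizer Q π h m)
    refine (coeffIntegral_const_mul _ (hQT.sub hconst)).trans ?_
    rw [coeffIntegral_sub hQT hconst, coeffIntegral_coeffIntegral_of_invariant hQ hT,
      coeffIntegral_const, normalizer, sub_self, mul_zero]

lemma normalizer_sub_one (hQ : Q.Invariant π) (hh : HasAllMoments h π) (hh₀ : ∫ x, h x ∂π = 0)
    (m : ℕ) :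
    normalizer Q π h m - 1 = coeffIntegral π fun x =>
      expSubOneSubId (h x) + expSubOne (h x) * corrector Q π h m x := by
  have hU := hasCoeffMoments_corrector hQ hh m
  have hX := HasCoeffMoments.C_mul hh PowerSeries.X
  have hmajor := (HasCoeffMoments.expSubOneSubId hh).add ((HasCoeffMoments.expSubOne hh).mul hU)
  have hlinear : coeffIntegral π (fun x => PowerSeries.C (h x) * PowerSeries.X) = 0 := by
    ext i
    simp only [coeff_coeffIntegral, PowerSeries.coeff_C_mul, integral_mul_const, hh₀, zero_mul,
      map_zero]
  have hsplit : tiltedSeries h (corrector Q π h m) = fun x =>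
      1 + corrector Q π h m x + (PowerSeries.C (h x) * PowerSeries.X +
        (expSubOneSubId (h x) + expSubOne (h x) * corrector Q π h m x)) := by
    funext x
    simp only [tiltedSeries, expSubOneSubId, expSubOne]
    ring
  have hone := HasCoeffMoments.const (μ := π) 1
  rw [normalizer, hsplit, coeffIntegral_add (hone.add hU) (hX.add hmajor),
    coeffIntegral_add hone hU, coeffIntegral_add hX hmajor, hlinear, coeffIntegral_const,
    coeffIntegral_corrector hQ hh]
  ring

end Corrector

section PartialSumLaplace

variable {X Ω : Type*} [MeasurableSpace Ω]

/-- The formal Laplace transform of the partial sum `∑ j < n, h (Xs j)`. -/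
def partialSumLaplace (P : Measure Ω) (Xs : ℕ → Ω → X) (h : X → ℝ) (n : ℕ) : PowerSeries ℝ :=
  coeffIntegral P fun ω => PowerSeries.rescale (∑ j ∈ range n, h (Xs j ω)) (PowerSeries.exp ℝ)

lemma coeff_partialSumLaplace (P : Measure Ω) (Xs : ℕ → Ω → X) (h : X → ℝ) (n i : ℕ) :
    PowerSeries.coeff i (partialSumLaplace P Xs h n) =
      (∫ ω, (∑ j ∈ range n, h (Xs j ω)) ^ i ∂P) / (i.factorial : ℝ) := by
  simp only [partialSumLaplace, coeff_coeffIntegral, coeff_rescale_exp, integral_div]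

end PartialSumLaplace

section MarkovChain

variable {X : Type*} [MeasurableSpace X] {Ω : Type*} {Xs : ℕ → Ω → X}

/-- The σ-algebra generated by `Xs 0, …, Xs n`. -/
abbrev pastSigma (Xs : ℕ → Ω → X) (n : ℕ) : MeasurableSpace Ω :=
  ⨆ i ∈ Finset.range (n + 1), MeasurableSpace.comap (Xs i) inferInstance

lemma measurable_pastSigma_comp {f : X → ℝ} (hf : Measurable f) {n i : ℕ} (hi : i ≤ n) :
    Measurable[pastSigma Xs n] fun ω => f (Xs i ω) :=
  (hf.comp (comap_measurable (Xs i))).mono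
    (le_iSup₂_of_le (f := fun i (_ : i ∈ Finset.range (n + 1)) =>
      MeasurableSpace.comap (Xs i) inferInstance) i (mem_range.2 (by lia)) le_rfl) le_rfl

variable [mΩ : MeasurableSpace Ω] {P : Measure Ω} {Q : Kernel X X} {π ξ : Measure X}

lemma pastSigma_le (hX : ∀ n, Measurable (Xs n)) (n : ℕ) : pastSigma Xs n ≤ mΩ :=
  iSup₂_le fun i _ => (hX i).comap_le

namespace IsMarkovChain

lemma condExp_of_abs_le (hX : IsMarkovChain P Xs ξ Q) (n : ℕ) {f : X → ℝ} (hf : Measurable f)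
    {N : ℝ} (hN : 0 < N) (hfN : ∀ x, |f x| ≤ N) :
    P[fun ω => f (Xs (n + 1) ω) | pastSigma Xs n] =ᵐ[P] fun ω => ∫ y, f y ∂(Q (Xs n ω)) := by
  have hscaled : P[fun ω => N⁻¹ * f (Xs (n + 1) ω) | pastSigma Xs n]
      =ᵐ[P] fun ω => ∫ y, N⁻¹ * f y ∂(Q (Xs n ω)) :=
    hX.markov n (fun x => N⁻¹ * f x) (hf.const_mul _) fun x => by
      rw [abs_mul, abs_inv, abs_of_pos hN]
      exact inv_mul_le_one_of_le₀ (hfN x) hN.le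
  have hsmul : P[N • (fun ω => N⁻¹ * f (Xs (n + 1) ω)) | pastSigma Xs n]
      =ᵐ[P] N • P[fun ω => N⁻¹ * f (Xs (n + 1) ω) | pastSigma Xs n] := condExp_smul N _ _
  have hcancel : (N • fun ω => N⁻¹ * f (Xs (n + 1) ω)) = fun ω => f (Xs (n + 1) ω) := by
    funext ω
    simp [mul_inv_cancel_left₀ hN.ne']
  rw [hcancel] at hsmul
  filter_upwards [hscaled, hsmul] with ω hω hω'
  rw [hω', Pi.smul_apply, hω, integral_const_mul, smul_eq_mul, mul_inv_cancel_left₀ hN.ne']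

lemma integral_mul_of_abs_le [IsFiniteMeasure P] (hX : IsMarkovChain P Xs ξ Q) (n : ℕ)
    {f : X → ℝ} (hf : Measurable f) {N : ℝ} (hN : 0 < N) (hfN : ∀ x, |f x| ≤ N) {H : Ω → ℝ}
    (hH : Integrable H P) (hHm : Measurable[pastSigma Xs n] H) :
    ∫ ω, H ω * f (Xs (n + 1) ω) ∂P = ∫ ω, H ω * ∫ y, f y ∂(Q (Xs n ω)) ∂P := by
  have hfm : AEStronglyMeasurable (fun ω => f (Xs (n + 1) ω)) P :=
    (hf.comp (hX.meas _)).aestronglyMeasurable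
  have hfX : Integrable (fun ω => f (Xs (n + 1) ω)) P :=
    Integrable.of_bound hfm N (ae_of_all _ fun ω => hfN _)
  have hHf : Integrable (H * fun ω => f (Xs (n + 1) ω)) P :=
    hH.mul_bdd hfm (ae_of_all _ fun ω => hfN _)
  calc ∫ ω, H ω * f (Xs (n + 1) ω) ∂P
      = ∫ ω, (P[H * fun ω => f (Xs (n + 1) ω) | pastSigma Xs n]) ω ∂P :=
        (integral_condExp (pastSigma_le hX.meas n)).symm
    _ = ∫ ω, H ω * ∫ y, f y ∂(Q (Xs n ω)) ∂P := integral_congr_ae <| by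
        filter_upwards [condExp_mul_of_stronglyMeasurable_left hHm.stronglyMeasurable hHf hfX,
          hX.condExp_of_abs_le n hf hN hfN] with ω hpull hω
        rw [hpull, Pi.mul_apply, hω]

lemma integral_comp_succ_of_abs_le [IsProbabilityMeasure P] (hX : IsMarkovChain P Xs ξ Q) (n : ℕ)
    {f : X → ℝ} (hf : Measurable f) {N : ℝ} (hN : 0 < N) (hfN : ∀ x, |f x| ≤ N) :
    ∫ ω, f (Xs (n + 1) ω) ∂P = ∫ ω, ∫ y, f y ∂(Q (Xs n ω)) ∂P := by
  simpa only [one_mul] using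
    hX.integral_mul_of_abs_le n hf hN hfN (integrable_const (1 : ℝ)) measurable_const

variable [IsProbabilityMeasure π] [IsProbabilityMeasure P]

lemma map_eq_of_invariant (hX : IsMarkovChain P Xs π Q) (hQ : Q.Invariant π) (n : ℕ) :
    P.map (Xs n) = π := by
  induction n with
  | zero => exact hX.init
  | succ n ih =>
    have := Measure.isProbabilityMeasure_map (μ := P) (hX.meas (n + 1)).aemeasurable
    refine Measure.ext fun A hA => (measureReal_eq_measureReal_iff).1 ?_
    have hm : Measurable (A.indicator fun _ => (1 : ℝ)) := measurable_const.indicator hA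
    have hint : Integrable (A.indicator fun _ => (1 : ℝ)) π := (integrable_const 1).indicator hA
    have hle : ∀ x, |A.indicator (fun _ => (1 : ℝ)) x| ≤ 1 := fun x => by
      by_cases hx : x ∈ A <;> simp [hx]
    have hQm : Measurable fun x => ∫ y, A.indicator (fun _ => (1 : ℝ)) y ∂(Q x) :=
      (hm.stronglyMeasurable.integral_kernel (κ := Q)).measurable
    suffices ∫ x, A.indicator (fun _ => (1 : ℝ)) x ∂(P.map (Xs (n + 1))) =
        ∫ x, A.indicator (fun _ => (1 : ℝ)) x ∂π by
      simpa only [integral_indicator_const _ hA, smul_eq_mul, mul_one] using this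
    rw [integral_map (hX.meas _).aemeasurable hm.aestronglyMeasurable,
      hX.integral_comp_succ_of_abs_le n hm one_pos hle, ← integral_integral_of_invariant hQ hint,
      ← integral_map (hX.meas n).aemeasurable hQm.aestronglyMeasurable, ih]

lemma ae_of_invariant (hX : IsMarkovChain P Xs π Q) (hQ : Q.Invariant π) (n : ℕ) {p : X → Prop}
    (hp : ∀ᵐ x ∂π, p x) : ∀ᵐ ω ∂P, p (Xs n ω) :=
  ae_of_ae_map (hX.meas n).aemeasurable ((hX.map_eq_of_invariant hQ n).symm ▸ hp)

lemma hasAllMoments_sum (hX : IsMarkovChain P Xs π Q) (hQ : Q.Invariant π)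
    {h : X → ℝ} (hh : HasAllMoments h π) (n : ℕ) :
    HasAllMoments (fun ω => ∑ j ∈ range n, h (Xs j ω)) P :=
  HasAllMoments.sum _ fun j _ => hh.comp (hX.meas j) (hX.map_eq_of_invariant hQ j)

end IsMarkovChain

lemma measurable_truncation {Y : Type*} [MeasurableSpace Y] {f : Y → ℝ} (hf : Measurable f)
    (A : ℝ) : Measurable (truncation f A) :=
  (measurable_id.indicator measurableSet_Ioc).comp hf

lemma tendsto_truncation {Y : Type*} (f : Y → ℝ) (x : Y) :
    Filter.Tendsto (fun N : ℕ => truncation f (N + 1) x) Filter.atTop (nhds (f x)) := by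
  obtain ⟨M, hM⟩ := exists_nat_ge |f x|
  refine tendsto_const_nhds.congr' ?_
  filter_upwards [Filter.eventually_ge_atTop M] with N hN
  refine (truncation_eq_self ?_).symm
  have : (M : ℝ) ≤ N := by exact_mod_cast hN
  linarith

lemma tendsto_integral_mul_truncation {H : Ω → ℝ} {f : X → ℝ} {φ : Ω → X} (hH : Measurable H)
    (hf : Measurable f) (hφ : Measurable φ) (hint : Integrable (fun ω => H ω * f (φ ω)) P) :
    Filter.Tendsto (fun N : ℕ => ∫ ω, H ω * truncation f (N + 1) (φ ω) ∂P) Filter.atTop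
      (nhds (∫ ω, H ω * f (φ ω) ∂P)) := by
  refine tendsto_integral_of_dominated_convergence (fun ω => |H ω * f (φ ω)|)
    (fun N => (hH.mul ((measurable_truncation hf _).comp hφ)).aestronglyMeasurable) hint.abs
    (fun N => ae_of_all _ fun ω => ?_)
    (ae_of_all _ fun ω => (tendsto_truncation f _).const_mul _)
  rw [Real.norm_eq_abs, abs_mul, abs_mul]
  refine mul_le_mul_of_nonneg_left ?_ (abs_nonneg _)
  exact abs_truncation_le_abs_self f _ _

lemma tendsto_integral_mul_integral_truncation [IsMarkovKernel Q] {H : Ω → ℝ} {f : X → ℝ}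
    {φ : Ω → X} (hH : Measurable H) (hf : Measurable f) (hφ : Measurable φ)
    (hfφ : ∀ᵐ ω ∂P, Integrable f (Q (φ ω)))
    (hint : Integrable (fun ω => H ω * ∫ y, |f y| ∂(Q (φ ω))) P) :
    Filter.Tendsto (fun N : ℕ => ∫ ω, H ω * ∫ y, truncation f (N + 1) y ∂(Q (φ ω)) ∂P)
      Filter.atTop (nhds (∫ ω, H ω * ∫ y, f y ∂(Q (φ ω)) ∂P)) := by
  have hmeas (N : ℕ) : Measurable fun x => ∫ y, truncation f (N + 1) y ∂(Q x) :=
    ((measurable_truncation hf _).stronglyMeasurable.integral_kernel (κ := Q)).measurable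
  refine tendsto_integral_of_dominated_convergence (fun ω => |H ω * ∫ y, |f y| ∂(Q (φ ω))|)
    (fun N => (hH.mul ((hmeas N).comp hφ)).aestronglyMeasurable) hint.abs (fun N => ?_) ?_
  · filter_upwards [hfφ] with ω hω
    rw [Real.norm_eq_abs, abs_mul, abs_mul]
    refine mul_le_mul_of_nonneg_left ?_ (abs_nonneg _)
    refine (abs_integral_le_integral_abs.trans ?_).trans (le_abs_self _)
    exact integral_mono_of_nonneg (ae_of_all _ fun y => abs_nonneg _) hω.abs
      (ae_of_all _ fun y => abs_truncation_le_abs_self f _ y)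
  · filter_upwards [hfφ] with ω hω
    exact ((tendsto_integral_truncation hω).comp (Filter.tendsto_atTop_add_const_right _ 1
      tendsto_natCast_atTop_atTop)).const_mul _

variable [IsMarkovKernel Q] [IsProbabilityMeasure π] [IsProbabilityMeasure P]

lemma IsMarkovChain.integral_mul (hX : IsMarkovChain P Xs π Q) (hQ : Q.Invariant π) (n : ℕ)
    {f : X → ℝ} (hf : HasAllMoments f π) {H : Ω → ℝ} (hH : HasAllMoments H P)
    (hHm : Measurable[pastSigma Xs n] H) :
    ∫ ω, H ω * f (Xs (n + 1) ω) ∂P = ∫ ω, H ω * ∫ y, f y ∂(Q (Xs n ω)) ∂P := by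
  have hfX := hf.comp (hX.meas (n + 1)) (hX.map_eq_of_invariant hQ (n + 1))
  have hQfX := (hf.abs.integral_kernel hQ).comp (hX.meas n) (hX.map_eq_of_invariant hQ n)
  refine tendsto_nhds_unique (tendsto_integral_mul_truncation hH.measurable hf.measurable
    (hX.meas (n + 1)) (hH.mul hfX).integrable) ?_
  refine (tendsto_integral_mul_integral_truncation hH.measurable hf.measurable (hX.meas n)
    (hX.ae_of_invariant hQ n (ae_integrable_of_invariant hQ hf.integrable))
    (hH.mul hQfX).integrable).congr fun N => ?_
  have hN : (0 : ℝ) < N + 1 := by positivity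
  refine (hX.integral_mul_of_abs_le n (measurable_truncation hf.measurable _) hN
    (fun x => ?_) hH.integrable hHm).symm
  simpa only [abs_of_pos hN] using abs_truncation_le_bound f (N + 1 : ℝ) x

lemma IsMarkovChain.coeffIntegral_rescale_exp_mul (hX : IsMarkovChain P Xs π Q)
    (hQ : Q.Invariant π) (n : ℕ) {T : X → PowerSeries ℝ} (hT : HasCoeffMoments T π) {H : Ω → ℝ}
    (hH : HasAllMoments H P) (hHm : Measurable[pastSigma Xs n] H) :
    coeffIntegral P (fun ω =>
        PowerSeries.rescale (H ω) (PowerSeries.exp ℝ) * T (Xs (n + 1) ω)) =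
      coeffIntegral P (fun ω =>
        PowerSeries.rescale (H ω) (PowerSeries.exp ℝ) * coeffIntegral (Q (Xs n ω)) T) := by
  have hHi (i : ℕ) : HasAllMoments (fun ω => H ω ^ i / (i.factorial : ℝ)) P := by
    simpa only [coeff_rescale_exp] using HasCoeffMoments.rescale_exp hH i
  have hTX := hT.comp (hX.meas (n + 1)) (hX.map_eq_of_invariant hQ (n + 1))
  have hQTX := (hT.coeffIntegral_kernel hQ).comp (hX.meas n) (hX.map_eq_of_invariant hQ n)
  ext p
  simp only [coeff_coeffIntegral, PowerSeries.coeff_mul, coeff_rescale_exp]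
  rw [integral_finsetSum _ fun i _ => ((hHi i.1).mul (hTX i.2)).integrable,
    integral_finsetSum _ fun i _ => by
      simpa only [coeff_coeffIntegral] using ((hHi i.1).mul (hQTX i.2)).integrable]
  exact sum_congr rfl fun i _ =>
    hX.integral_mul hQ n (hT i.2) (hHi i.1) ((hHm.pow_const i.1).div_const _)

variable {h : X → ℝ}

lemma IsMarkovChain.coeffIntegral_exp_mul_tiltedSeries (hX : IsMarkovChain P Xs π Q)
    (hQ : Q.Invariant π) (hh : HasAllMoments h π) (n m : ℕ) :
    coeffIntegral P (fun ω =>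
        PowerSeries.rescale (∑ j ∈ range n, h (Xs j ω)) (PowerSeries.exp ℝ) *
          tiltedSeries h (corrector Q π h m) (Xs n ω)) =
      ∏ j ∈ range (n + 1), normalizer Q π h (m + j) := by
  have hT (m : ℕ) := hasCoeffMoments_tiltedSeries_corrector hQ hh m
  induction n generalizing m with
  | zero =>
    ext i
    have := integral_map (hX.meas 0).aemeasurable (hT m i).measurable.aestronglyMeasurable (μ := P)
    rw [hX.init] at this
    simpa [coeff_coeffIntegral, normalizer] using this.symm
  | succ n ih =>
    have hpast : Measurable[pastSigma Xs n] fun ω => ∑ j ∈ range (n + 1), h (Xs j ω) :=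
      Finset.measurable_fun_sum _ fun j hj =>
        measurable_pastSigma_comp hh.measurable (Nat.lt_succ_iff.1 (mem_range.1 hj))
    have hstep (ω : Ω) :
        PowerSeries.rescale (∑ j ∈ range (n + 1), h (Xs j ω)) (PowerSeries.exp ℝ) *
            coeffIntegral (Q (Xs n ω)) (tiltedSeries h (corrector Q π h m)) =
          normalizer Q π h m *
            (PowerSeries.rescale (∑ j ∈ range n, h (Xs j ω)) (PowerSeries.exp ℝ) *
              tiltedSeries h (corrector Q π h (m + 1)) (Xs n ω)) := by
      rw [rescale_sum_succ_mul_tiltedSeries h fun j => Xs j ω, coeffIntegral_tiltedSeries_corrector,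
        mul_left_comm]
    have hmom := (HasCoeffMoments.rescale_exp (hX.hasAllMoments_sum hQ hh n)).mul
      ((hT (m + 1)).comp (hX.meas n) (hX.map_eq_of_invariant hQ n))
    rw [hX.coeffIntegral_rescale_exp_mul hQ n (hT m) (hX.hasAllMoments_sum hQ hh (n + 1)) hpast]
    simp only [hstep]
    rw [coeffIntegral_const_mul _ hmom, ih (m + 1), prod_range_succ' _ (n + 1), mul_comm]
    simp only [add_zero, add_assoc, add_comm 1]

lemma IsMarkovChain.partialSumLaplace_eq_prod (hX : IsMarkovChain P Xs π Q) (hQ : Q.Invariant π)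
    (hh : HasAllMoments h π) (n : ℕ) :
    partialSumLaplace P Xs h n = ∏ j ∈ range n, normalizer Q π h j := by
  rcases n with _ | n
  · ext i
    simp [partialSumLaplace, coeff_coeffIntegral]
  · have hprod := hX.coeffIntegral_exp_mul_tiltedSeries hQ hh n 0
    simp only [zero_add] at hprod
    rw [← hprod, partialSumLaplace]
    congr 1
    funext ω
    rw [rescale_sum_succ_mul_tiltedSeries h fun j => Xs j ω, corrector, add_zero, mul_one]

end MarkovChain

lemma derivative_prod_eq_sum_mul_prod {R : Type*} [Field R] (n : ℕ) {r : ℕ → PowerSeries R}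
    (hr : ∀ j, r j * (r j)⁻¹ = 1) :
    PowerSeries.derivative R (∏ j ∈ range n, r j) =
      (∑ j ∈ range n, PowerSeries.derivative R (r j) * (r j)⁻¹) * ∏ j ∈ range n, r j := by
  induction n with
  | zero => simp
  | succ n ih =>
    rw [prod_range_succ, sum_range_succ, Derivation.leibniz, ih]
    simp only [smul_eq_mul]
    linear_combination (-(∏ j ∈ range n, r j) * PowerSeries.derivative R (r n)) * hr n

section PointwiseBounds

variable {K : ℕ} {b t y : ℝ} {f u : PowerSeries ℝ}

lemma coeff_mul_nonneg (hf : ∀ i, 0 ≤ PowerSeries.coeff i f) (hu : ∀ i, 0 ≤ PowerSeries.coeff i u)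
    (i : ℕ) : 0 ≤ PowerSeries.coeff i (f * u) := by
  rw [PowerSeries.coeff_mul]
  exact sum_nonneg fun p _ => mul_nonneg (hf p.1) (hu p.2)

lemma coeff_one_add_nonneg (hu : ∀ i, 0 ≤ PowerSeries.coeff i u) (i : ℕ) :
    0 ≤ PowerSeries.coeff i (1 + u) := by
  rw [map_add, PowerSeries.coeff_one]
  exact add_nonneg (by split_ifs <;> norm_num) (hu i)

lemma abs_coeff_one_add_le {i : ℕ}
    (hf : |PowerSeries.coeff i f| ≤ PowerSeries.coeff i u * t ^ i) :
    |PowerSeries.coeff i (1 + f)| ≤ PowerSeries.coeff i (1 + u) * t ^ i := by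
  rw [map_add, map_add, add_mul, PowerSeries.coeff_one]
  refine (abs_add_le _ _).trans (add_le_add ?_ hf)
  split_ifs with hi <;> simp [hi]

lemma abs_pow_div_factorial_le (hy : |y| ≤ b * t) (i : ℕ) :
    |y ^ i / (i.factorial : ℝ)| ≤ b ^ i / (i.factorial : ℝ) * t ^ i := by
  rw [abs_div, abs_pow, Nat.abs_cast, div_mul_eq_mul_div, ← mul_pow]
  gcongr

lemma abs_coeff_expSubOne_le (hy : |y| ≤ b * t) :
    ∀ i, |PowerSeries.coeff i (expSubOne y)| ≤ PowerSeries.coeff i (expSubOne b) * t ^ i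
  | 0 => by simp [coeff_zero_expSubOne]
  | i + 1 => by
    simpa only [coeff_succ_expSubOne] using abs_pow_div_factorial_le hy (i + 1)

lemma abs_coeff_expSubOneSubId_le (hy : |y| ≤ b * t) :
    ∀ i, |PowerSeries.coeff i (expSubOneSubId y)| ≤ PowerSeries.coeff i (expSubOneSubId b) * t ^ i
  | 0 => by simp [coeff_zero_expSubOneSubId]
  | 1 => by simp [coeff_one_expSubOneSubId]
  | i + 2 => by
    simpa only [coeff_add_two_expSubOneSubId] using abs_pow_div_factorial_le hy (i + 2)

lemma abs_coeff_expSubOne_mul_le (hb : 0 ≤ b) (ht : 0 ≤ t) (hy : |y| ≤ b * t)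
    (hf : ∀ l < K, |PowerSeries.coeff l f| ≤ PowerSeries.coeff l u * t ^ l) {i : ℕ} (hi : i ≤ K) :
    |PowerSeries.coeff i (expSubOne y * f)| ≤ PowerSeries.coeff i (expSubOne b * u) * t ^ i := by
  rw [PowerSeries.coeff_mul, PowerSeries.coeff_mul, sum_mul]
  refine (abs_sum_le_sum_abs _ _).trans (sum_le_sum fun p hp => ?_)
  rw [HasAntidiagonal.mem_antidiagonal] at hp
  rw [abs_mul, ← hp, pow_add, mul_mul_mul_comm]
  rcases Nat.eq_zero_or_pos p.1 with hp₁ | hp₁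
  · simp [hp₁, coeff_zero_expSubOne]
  · exact mul_le_mul (abs_coeff_expSubOne_le hy _) (hf _ (by lia)) (abs_nonneg _)
      (mul_nonneg (coeff_expSubOne_nonneg hb _) (pow_nonneg ht _))

end PointwiseBounds

section Decay

variable {X : Type*} [MeasurableSpace X] {Q : Kernel X X} {π : Measure X}
  {q a a' : ℝ} {w w' f f' : X → ℝ}

/-- The functions `Q ^ s f` decay geometrically at rate `q`, relative to the weight `w` and with
constant `a`. -/
structure HasDecay (Q : Kernel X X) (π : Measure X) (q : ℝ) (w : X → ℝ) (a : ℝ) (f : X → ℝ) :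
    Prop where
  hasAllMoments : HasAllMoments f π
  abs_integral_le : ∀ s, ∀ᵐ x ∂π, |∫ y, f y ∂(kIter Q s x)| ≤ a * q ^ s * w x

namespace HasDecay

lemma ae_abs_le (hf : HasDecay Q π q w a f) : ∀ᵐ x ∂π, |f x| ≤ a * w x := by
  filter_upwards [hf.abs_integral_le 0] with x hx
  rwa [kIter, Kernel.id_apply, integral_dirac' _ _ hf.hasAllMoments.measurable.stronglyMeasurable,
    pow_zero, mul_one] at hx

lemma zero [IsFiniteMeasure π] : HasDecay Q π q w 0 fun _ => 0 :=
  ⟨HasAllMoments.const 0, fun s => ae_of_all _ fun x => by simp⟩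

lemma const_mul (r : ℝ) (hf : HasDecay Q π q w a f) :
    HasDecay Q π q w (|r| * a) fun x => r * f x := by
  refine ⟨hf.hasAllMoments.const_mul r, fun s => ?_⟩
  filter_upwards [hf.abs_integral_le s] with x hx
  rw [integral_const_mul, abs_mul, mul_assoc |r|, mul_assoc |r|]
  exact mul_le_mul_of_nonneg_left hx (abs_nonneg r)

lemma mono (hf : HasDecay Q π q w a f) (hq : 0 ≤ q) (ha : 0 ≤ a) (hw : ∀ x, w x ≤ w' x) :
    HasDecay Q π q w' a f := by
  refine ⟨hf.hasAllMoments, fun s => ?_⟩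
  filter_upwards [hf.abs_integral_le s] with x hx
  exact hx.trans (mul_le_mul_of_nonneg_left (hw x) (mul_nonneg ha (pow_nonneg hq s)))

variable [IsMarkovKernel Q]

lemma congr (hQ : Q.Invariant π) (hf : HasDecay Q π q w a f) (hf' : HasAllMoments f' π)
    (h : f =ᵐ[π] f') : HasDecay Q π q w a f' := by
  refine ⟨hf', fun s => ?_⟩
  filter_upwards [hf.abs_integral_le s, ae_ae_of_invariant (kIter_invariant hQ s) h] with x hx hxf
  rwa [← integral_congr_ae hxf]

lemma add (hQ : Q.Invariant π) (hf : HasDecay Q π q w a f) (hf' : HasDecay Q π q w a' f') :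
    HasDecay Q π q w (a + a') fun x => f x + f' x := by
  refine ⟨hf.hasAllMoments.add hf'.hasAllMoments, fun s => ?_⟩
  filter_upwards [hf.abs_integral_le s, hf'.abs_integral_le s,
    ae_integrable_of_invariant (kIter_invariant hQ s) hf.hasAllMoments.integrable,
    ae_integrable_of_invariant (kIter_invariant hQ s) hf'.hasAllMoments.integrable]
    with x hx hx' hint hint'
  rw [integral_add hint hint', add_mul, add_mul]
  exact (abs_add_le _ _).trans (add_le_add hx hx')

lemma sum [IsFiniteMeasure π] (hQ : Q.Invariant π) {ι : Type*} (s : Finset ι) {A : ι → ℝ}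
    {F : ι → X → ℝ} (h : ∀ i ∈ s, HasDecay Q π q w (A i) (F i)) :
    HasDecay Q π q w (∑ i ∈ s, A i) fun x => ∑ i ∈ s, F i x := by
  induction s using Finset.induction_on with
  | empty => simpa only [sum_empty] using zero
  | insert i s hi ih =>
    simp only [sum_insert hi]
    exact (h i (mem_insert_self i s)).add hQ (ih fun j hj => h j (mem_insert_of_mem hj))

lemma integral_kernel (hQ : Q.Invariant π) (hf : HasDecay Q π q w a f) :
    HasDecay Q π q w (q * a) fun x => ∫ y, f y ∂(Q x) := by
  refine ⟨hf.hasAllMoments.integral_kernel hQ, fun s => ?_⟩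
  filter_upwards [hf.abs_integral_le (s + 1),
    ae_integral_integral_kIter hQ hf.hasAllMoments.integrable s] with x hx hxs
  rw [hxs]
  exact hx.trans_eq (by ring)

end HasDecay

/-- For `1 ≤ i < K`, the iterates of `Q` converge to `π` at rate `q` on the functions bounded by
`v ^ i`, with the constant `C`; the moments of `v` of order less than `K` are at most `C`, and
the moment of order `K` is at most `A`. -/
structure GradedGap (Q : Kernel X X) (π : Measure X) (v : X → ℝ) (K : ℕ) (q C A : ℝ) : Prop where
  one_le : ∀ x, 1 ≤ v x
  rate_nonneg : 0 ≤ q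
  rate_lt_one : q < 1
  one_le_const : 1 ≤ C
  abs_integral_sub_le : ∀ i, 1 ≤ i → i < K → ∀ f : X → ℝ, HasAllMoments f π → ∀ a, 0 ≤ a →
    (∀ᵐ x ∂π, |f x| ≤ a * v x ^ i) →
    ∀ s, ∀ᵐ x ∂π, |∫ y, f y ∂(kIter Q s x) - ∫ y, f y ∂π| ≤ C * a * q ^ s * v x ^ i
  integrable_pow : ∀ i ≤ K, Integrable (fun x => v x ^ i) π
  integral_pow_le_const : ∀ i < K, ∫ x, v x ^ i ∂π ≤ C
  integral_pow_le : ∫ x, v x ^ K ∂π ≤ A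

variable {v : X → ℝ} {K : ℕ} {C A : ℝ} [IsMarkovKernel Q] [IsProbabilityMeasure π]

lemma GradedGap.hasDecay_integral_kernel_sub (hG : GradedGap Q π v K q C A) (hQ : Q.Invariant π)
    {i : ℕ} (hi : 1 ≤ i) (hiK : i < K) (hf : HasAllMoments f π) (ha : 0 ≤ a)
    (hfa : ∀ᵐ x ∂π, |f x| ≤ a * v x ^ i) :
    HasDecay Q π q (fun x => v x ^ i) (q * C * a) fun x => ∫ y, f y ∂(Q x) - ∫ y, f y ∂π := by
  have hQf := hf.integral_kernel hQ
  refine ⟨hQf.sub (HasAllMoments.const _), fun s => ?_⟩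
  filter_upwards [hG.abs_integral_sub_le i hi hiK f hf a ha hfa (s + 1),
    ae_integral_integral_kIter hQ hf.integrable s,
    ae_integrable_of_invariant (kIter_invariant hQ s) hQf.integrable] with x hx hxs hint
  rw [integral_sub hint (integrable_const _), integral_const, probReal_univ, one_smul, hxs]
  exact hx.trans_eq (by ring)

end Decay

section CoefficientBounds

variable {X : Type*} [MeasurableSpace X] {Q : Kernel X X} {π : Measure X} {v h : X → ℝ}
  {U : X → PowerSeries ℝ} {u : PowerSeries ℝ} {K : ℕ} {q C A b z : ℝ}

/-- The coefficients of `u` dominate those of the random series `U`, uniformly along the iterates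
of `Q`: the coefficient of order `i` is measured relative to `v ^ i`. -/
structure IsMajorant (Q : Kernel X X) (π : Measure X) (v : X → ℝ) (K : ℕ) (q : ℝ)
    (u : PowerSeries ℝ) (U : X → PowerSeries ℝ) : Prop where
  coeff_nonneg : ∀ i, 0 ≤ PowerSeries.coeff i u
  hasDecay : ∀ i < K,
    HasDecay Q π q (fun x => v x ^ i) (PowerSeries.coeff i u) fun x => PowerSeries.coeff i (U x)

lemma IsMajorant.ae_abs_coeff_le (hU : IsMajorant Q π v K q u U) :
    ∀ᵐ x ∂π, ∀ i < K, |PowerSeries.coeff i (U x)| ≤ PowerSeries.coeff i u * v x ^ i := by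
  refine ae_all_iff.2 fun i => ?_
  by_cases hi : i < K
  · filter_upwards [(hU.hasDecay i hi).ae_abs_le] with x hx _ using hx
  · exact ae_of_all _ fun x h => absurd h hi

/-- The series of absolute values of the coefficients. -/
def absSeries (f : PowerSeries ℝ) : PowerSeries ℝ :=
  PowerSeries.mk fun i => |PowerSeries.coeff i f|

lemma coeff_absSeries (f : PowerSeries ℝ) (i : ℕ) :
    PowerSeries.coeff i (absSeries f) = |PowerSeries.coeff i f| :=
  PowerSeries.coeff_mk i _

lemma truncNorm_absSeries (f : PowerSeries ℝ) : truncNorm K z (absSeries f) = truncNorm K z f := by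
  simp only [truncNorm, coeff_absSeries, abs_abs]

/-- The majorant of `U_{m+1}` obtained from the majorant `u` of `U_m` and the inverse `w` of the
normalising series. -/
def nextMajorant (q C b : ℝ) (w u : PowerSeries ℝ) : PowerSeries ℝ :=
  absSeries w * (PowerSeries.C q * u + PowerSeries.C (q * C) * (expSubOne b * (1 + u)))

namespace GradedGap

lemma integral_pow_le_of_le (hG : GradedGap Q π v K q C A) {i : ℕ} (hi : i ≤ K) :
    ∫ x, v x ^ i ∂π ≤ A :=
  (integral_mono (hG.integrable_pow i hi) (hG.integrable_pow K le_rfl) fun x =>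
    pow_le_pow_right₀ (hG.one_le x) hi).trans hG.integral_pow_le

lemma integral_pow_nonneg (hG : GradedGap Q π v K q C A) (i : ℕ) : 0 ≤ ∫ x, v x ^ i ∂π :=
  integral_nonneg fun x => pow_nonneg (zero_le_one.trans (hG.one_le x)) i

variable [IsProbabilityMeasure π] [IsMarkovKernel Q]

lemma abs_coeff_normalizer_sub_one_le (hG : GradedGap Q π v K q C A) (hQ : Q.Invariant π)
    (hh : HasAllMoments h π) (hh₀ : ∫ x, h x ∂π = 0) (hb : 0 ≤ b)
    (hhb : ∀ᵐ x ∂π, |h x| ≤ b * v x) {m : ℕ} (hU : IsMajorant Q π v K q u (corrector Q π h m))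
    {i : ℕ} (hi : i ≤ K) :
    |PowerSeries.coeff i (normalizer Q π h m - 1)| ≤
      PowerSeries.coeff i (expSubOneSubId b + expSubOne b * u) * ∫ x, v x ^ i ∂π := by
  have hmom := (HasCoeffMoments.expSubOneSubId hh).add
    ((HasCoeffMoments.expSubOne hh).mul (hasCoeffMoments_corrector hQ hh m))
  rw [normalizer_sub_one hQ hh hh₀, coeff_coeffIntegral, ← integral_const_mul]
  refine abs_integral_le_integral_abs.trans
    (integral_mono_ae (hmom i).integrable.abs ((hG.integrable_pow i hi).const_mul _) ?_)
  filter_upwards [hhb, hU.ae_abs_coeff_le] with x hhx hUx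
  rw [map_add, map_add, add_mul]
  exact (abs_add_le _ _).trans (add_le_add (abs_coeff_expSubOneSubId_le hhx i)
    (abs_coeff_expSubOne_mul_le hb (zero_le_one.trans (hG.one_le x)) hhx hUx hi))

lemma hasDecay_coeff_expSubOne_mul (hG : GradedGap Q π v K q C A) (hQ : Q.Invariant π)
    (hh : HasAllMoments h π) (hb : 0 ≤ b) (hhb : ∀ᵐ x ∂π, |h x| ≤ b * v x)
    (hUm : HasCoeffMoments U π) (hU : IsMajorant Q π v K q u U) {i : ℕ} (hi : i < K) :
    HasDecay Q π q (fun x => v x ^ i) (q * C * PowerSeries.coeff i (expSubOne b * (1 + u)))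
      fun x => PowerSeries.coeff i (coeffIntegral (Q x) (fun y => expSubOne (h y) * (1 + U y)) -
        coeffIntegral π fun y => expSubOne (h y) * (1 + U y)) := by
  simp only [map_sub, coeff_coeffIntegral]
  rcases Nat.eq_zero_or_pos i with rfl | hi₀
  · have hzero (y : ℝ) (f : PowerSeries ℝ) : PowerSeries.coeff 0 (expSubOne y * f) = 0 := by
      simp [PowerSeries.coeff_mul, coeff_zero_expSubOne]
    simpa only [hzero, integral_zero, sub_zero, mul_zero] using HasDecay.zero
  · refine hG.hasDecay_integral_kernel_sub hQ hi₀ hi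
      (((HasCoeffMoments.expSubOne hh).mul ((HasCoeffMoments.const (1 : PowerSeries ℝ)).add hUm)) i)
      (coeff_mul_nonneg (coeff_expSubOne_nonneg hb) (coeff_one_add_nonneg hU.coeff_nonneg) i) ?_
    filter_upwards [hhb, hU.ae_abs_coeff_le] with x hhx hUx
    exact abs_coeff_expSubOne_mul_le hb (zero_le_one.trans (hG.one_le x)) hhx
      (fun l hl => abs_coeff_one_add_le (hUx l hl)) hi.le

lemma hasDecay_coeff_coeffIntegral_sub (hG : GradedGap Q π v K q C A) (hQ : Q.Invariant π)
    (hh : HasAllMoments h π) (hb : 0 ≤ b) (hhb : ∀ᵐ x ∂π, |h x| ≤ b * v x)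
    (hUm : HasCoeffMoments U π) (hU₀ : coeffIntegral π U = 0) (hU : IsMajorant Q π v K q u U)
    {i : ℕ} (hi : i < K) :
    HasDecay Q π q (fun x => v x ^ i)
      (PowerSeries.coeff i
        (PowerSeries.C q * u + PowerSeries.C (q * C) * (expSubOne b * (1 + u))))
      fun x => PowerSeries.coeff i
        (coeffIntegral (Q x) (tiltedSeries h U) - coeffIntegral π (tiltedSeries h U)) := by
  have hE := (HasCoeffMoments.expSubOne hh).mul ((HasCoeffMoments.const 1).add hUm)
  have hT := hUm.tiltedSeries hh
  have hsplit (i : ℕ) (y : X) : PowerSeries.coeff i (tiltedSeries h U y) =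
      PowerSeries.coeff i (1 : PowerSeries ℝ) + (PowerSeries.coeff i (U y) +
        PowerSeries.coeff i (expSubOne (h y) * (1 + U y))) := by
    rw [← map_add, ← map_add, tiltedSeries, expSubOne]
    ring_nf
  have hUi : ∫ y, PowerSeries.coeff i (U y) ∂π = 0 := by
    rw [← coeff_coeffIntegral, hU₀, map_zero]
  simp only [map_add, PowerSeries.coeff_C_mul]
  refine (((hU.hasDecay i hi).integral_kernel hQ).add hQ
    (hG.hasDecay_coeff_expSubOne_mul hQ hh hb hhb hUm hU hi)).congr hQ
    (((hT.coeffIntegral_kernel hQ).sub (HasCoeffMoments.const _)) i) ?_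
  have integrable_sum {η : Measure X} (hUη : Integrable (fun y => PowerSeries.coeff i (U y)) η)
      (hEη : Integrable (fun y => PowerSeries.coeff i (expSubOne (h y) * (1 + U y))) η) :
      Integrable (fun y => PowerSeries.coeff i (U y) +
        PowerSeries.coeff i (expSubOne (h y) * (1 + U y))) η := hUη.add hEη
  filter_upwards [ae_integrable_of_invariant hQ (hUm i).integrable,
    ae_integrable_of_invariant hQ (hE i).integrable] with x hUx hEx
  simp only [map_sub, coeff_coeffIntegral, hsplit]
  rw [integral_add (integrable_const _) (integrable_sum hUx hEx), integral_add hUx hEx,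
    integral_add (integrable_const _) (integrable_sum (hUm i).integrable (hE i).integrable),
    integral_add (hUm i).integrable (hE i).integrable, hUi]
  simp only [integral_const, probReal_univ]
  ring

lemma isMajorant_corrector_succ (hG : GradedGap Q π v K q C A) (hQ : Q.Invariant π)
    (hh : HasAllMoments h π) (hb : 0 ≤ b) (hhb : ∀ᵐ x ∂π, |h x| ≤ b * v x) {m : ℕ}
    (hU : IsMajorant Q π v K q u (corrector Q π h m)) :
    IsMajorant Q π v K q (nextMajorant q C b (normalizer Q π h m)⁻¹ u)
      (corrector Q π h (m + 1)) := by
  have hq := hG.rate_nonneg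
  have hC := zero_le_one.trans hG.one_le_const
  have hsource (i : ℕ) : 0 ≤ PowerSeries.coeff i
      (PowerSeries.C q * u + PowerSeries.C (q * C) * (expSubOne b * (1 + u))) := by
    rw [map_add, PowerSeries.coeff_C_mul, PowerSeries.coeff_C_mul]
    exact add_nonneg (mul_nonneg hq (hU.coeff_nonneg i)) (mul_nonneg (mul_nonneg hq hC)
      (coeff_mul_nonneg (coeff_expSubOne_nonneg hb) (coeff_one_add_nonneg hU.coeff_nonneg) i))
  refine ⟨coeff_mul_nonneg (fun i => ?_) hsource, fun i hi => ?_⟩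
  · rw [coeff_absSeries]
    exact abs_nonneg _
  · simp only [nextMajorant, corrector, PowerSeries.coeff_mul, coeff_absSeries]
    refine HasDecay.sum hQ _ fun p hp => ?_
    have hpi : p.2 ≤ i := HasAntidiagonal.antidiagonal.snd_le hp
    refine ((hG.hasDecay_coeff_coeffIntegral_sub hQ hh hb hhb (hasCoeffMoments_corrector hQ hh m)
      (coeffIntegral_corrector hQ hh m) hU (hpi.trans_lt hi)).const_mul _).mono hq
      (mul_nonneg (abs_nonneg _) (hsource p.2)) fun x => pow_le_pow_right₀ (hG.one_le x) hpi

lemma truncNorm_inv_normalizer_mul_le (hG : GradedGap Q π v K q C A) (hQ : Q.Invariant π)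
    (hh : HasAllMoments h π) (hh₀ : ∫ x, h x ∂π = 0) (hb : 0 ≤ b)
    (hhb : ∀ᵐ x ∂π, |h x| ≤ b * v x) (hz : 0 ≤ z) (hbz : 4 * C * (b * z) = 1 - q) {m : ℕ}
    (hU : IsMajorant Q π v K q u (corrector Q π h m)) (hu : truncNorm K z u ≤ 2 / 5 * q) :
    truncNorm K z (normalizer Q π h m)⁻¹ * (1 - (1 - q) / 10) ≤ 1 := by
  have hC := one_pos.trans_le hG.one_le_const
  refine truncNorm_inv_mul_le hz (coeff_zero_normalizer m) ?_
  calc truncNorm K z (normalizer Q π h m - 1)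
      ≤ C * truncNorm K z (expSubOneSubId b + expSubOne b * u) :=
        truncNorm_le_mul_of_coeff_le hz fun i hi => by
          refine (hG.abs_coeff_normalizer_sub_one_le hQ hh hh₀ hb hhb hU hi.le).trans ?_
          rw [mul_comm C]
          exact mul_le_mul (le_abs_self _) (hG.integral_pow_le_const i hi)
            (hG.integral_pow_nonneg i) (abs_nonneg _)
    _ ≤ C * ((1 - q) / (10 * C)) := mul_le_mul_of_nonneg_left ((truncNorm_le_succ hz _).trans
        (truncNorm_majorant_le hG.rate_nonneg hG.one_le_const hb hz hbz hu)) hC.le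
    _ = (1 - q) / 10 := by field_simp

lemma truncNorm_normalizer_sub_one_le (hG : GradedGap Q π v K q C A) (hQ : Q.Invariant π)
    (hh : HasAllMoments h π) (hh₀ : ∫ x, h x ∂π = 0) (hb : 0 ≤ b)
    (hhb : ∀ᵐ x ∂π, |h x| ≤ b * v x) (hz : 0 ≤ z) (hbz : 4 * C * (b * z) = 1 - q) {m : ℕ}
    (hU : IsMajorant Q π v K q u (corrector Q π h m)) (hu : truncNorm K z u ≤ 2 / 5 * q) :
    truncNorm (K + 1) z (normalizer Q π h m - 1) ≤ A * ((1 - q) / (10 * C)) := by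
  have hA : 0 ≤ A := (hG.integral_pow_nonneg K).trans hG.integral_pow_le
  refine (truncNorm_le_mul_of_coeff_le hz fun i hi => ?_).trans (mul_le_mul_of_nonneg_left
    (truncNorm_majorant_le hG.rate_nonneg hG.one_le_const hb hz hbz hu) hA)
  refine (hG.abs_coeff_normalizer_sub_one_le hQ hh hh₀ hb hhb hU (Nat.lt_succ_iff.1 hi)).trans ?_
  rw [mul_comm A]
  exact mul_le_mul (le_abs_self _) (hG.integral_pow_le_of_le (Nat.lt_succ_iff.1 hi))
    (hG.integral_pow_nonneg i) (abs_nonneg _)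

lemma exists_isMajorant_corrector (hG : GradedGap Q π v K q C A) (hQ : Q.Invariant π)
    (hh : HasAllMoments h π) (hh₀ : ∫ x, h x ∂π = 0) (hb : 0 ≤ b)
    (hhb : ∀ᵐ x ∂π, |h x| ≤ b * v x) (hz : 0 ≤ z) (hbz : 4 * C * (b * z) = 1 - q) (m : ℕ) :
    ∃ u, IsMajorant Q π v K q u (corrector Q π h m) ∧ truncNorm K z u ≤ 2 / 5 * q := by
  have hq := hG.rate_nonneg
  induction m with
  | zero =>
    refine ⟨0, ⟨fun i => (map_zero _).ge, fun i _ => ?_⟩, ?_⟩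
    · simpa only [corrector, map_zero] using HasDecay.zero
    · simp only [truncNorm, map_zero, abs_zero, zero_mul, sum_const_zero]
      positivity
  | succ m ih =>
    obtain ⟨u, hU, hu⟩ := ih
    refine ⟨_, hG.isMajorant_corrector_succ hQ hh hb hhb hU,
      truncNorm_majorant_step_le hq hG.one_le_const hb hz hbz hu ?_⟩
    rw [truncNorm_absSeries]
    exact hG.truncNorm_inv_normalizer_mul_le hQ hh hh₀ hb hhb hz hbz hU hu

lemma abs_coeff_derivative_normalizer_mul_inv_le {k : ℕ} (hG : GradedGap Q π v (k + 1) q C A)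
    (hQ : Q.Invariant π) (hh : HasAllMoments h π) (hh₀ : ∫ x, h x ∂π = 0) (hb : 0 < b)
    (hhb : ∀ᵐ x ∂π, |h x| ≤ b * v x) (m : ℕ) :
    |PowerSeries.coeff k
        (PowerSeries.derivative ℝ (normalizer Q π h m) * (normalizer Q π h m)⁻¹)| ≤
      (k + 1) * A * ((1 - q) / (9 * C)) * (4 * C * b / (1 - q)) ^ (k + 1) := by
  have hC := one_pos.trans_le hG.one_le_const
  have hq := sub_pos.2 hG.rate_lt_one
  set r := normalizer Q π h m
  set z := (1 - q) / (4 * C * b) with hz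
  have hz₀ : 0 < z := by positivity
  have hbz : 4 * C * (b * z) = 1 - q := by rw [hz]; field_simp
  obtain ⟨u, hU, hu⟩ := hG.exists_isMajorant_corrector hQ hh hh₀ hb.le hhb hz₀.le hbz m
  have hinv : truncNorm (k + 1) z r⁻¹ ≤ 10 / 9 := by
    have := hG.truncNorm_inv_normalizer_mul_le hQ hh hh₀ hb.le hhb hz₀.le hbz hU hu
    nlinarith [truncNorm_nonneg (K := k + 1) hz₀.le r⁻¹, hG.rate_nonneg]
  have hsub := hG.truncNorm_normalizer_sub_one_le hQ hh hh₀ hb.le hhb hz₀.le hbz hU hu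
  have hderiv : PowerSeries.derivative ℝ (r - 1) = PowerSeries.derivative ℝ r := by
    rw [map_sub, Derivation.map_one_eq_zero, sub_zero]
  have hcoeff := abs_coeff_derivative_mul_le hz₀.le k (r - 1) r⁻¹
  rw [hderiv] at hcoeff
  rw [show 4 * C * b / (1 - q) = z⁻¹ from (inv_div _ _).symm, inv_pow, ← div_eq_mul_inv,
    le_div_iff₀ (pow_pos hz₀ _)]
  calc |PowerSeries.coeff k (PowerSeries.derivative ℝ r * r⁻¹)| * z ^ (k + 1)
      ≤ (k + 1) * (truncNorm (k + 2) z (r - 1) * truncNorm (k + 1) z r⁻¹) := hcoeff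
    _ ≤ (k + 1) * (A * ((1 - q) / (10 * C)) * (10 / 9)) := by
        refine mul_le_mul_of_nonneg_left (mul_le_mul hsub hinv (truncNorm_nonneg hz₀.le _) ?_)
          (by positivity)
        exact (truncNorm_nonneg hz₀.le _).trans hsub
    _ = (k + 1) * A * ((1 - q) / (9 * C)) := by field_simp

end GradedGap

end CoefficientBounds

section WeightedTotalVariation

variable {X : Type*} [MeasurableSpace X] {μ ν : Measure X} {V f : X → ℝ} {a m u M : ℝ}

lemma rpow_le_rpow_mul_affine {x : ℝ} (hx : 0 ≤ x) (hm : 0 < m) (hu₀ : 0 ≤ u) (hu₁ : u ≤ 1) :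
    x ^ u ≤ m ^ u * (1 - u + u * (x / m)) := by
  have h := Real.geom_mean_le_arith_mean2_weighted hu₀ (sub_nonneg.2 hu₁)
    (div_nonneg hx hm.le) zero_le_one (by ring)
  rw [Real.one_rpow, mul_one, mul_one, Real.div_rpow hx hm.le,
    div_le_iff₀' (Real.rpow_pos_of_pos hm u)] at h
  rwa [add_comm (1 - u)]

lemma abs_integral_le_of_abs_le_rpow [IsFiniteMeasure μ] (hμ : μ.real Set.univ ≤ 1)
    (hV₀ : ∀ x, 0 ≤ V x) (hV : Integrable V μ) (hm : 0 < m) (hu₀ : 0 ≤ u) (hu₁ : u ≤ 1)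
    (ha : 0 ≤ a) (hf : ∀ᵐ x ∂μ, |f x| ≤ a * V x ^ u) :
    |∫ x, f x ∂μ| ≤ a * (m ^ u * (1 - u + u * ((∫ x, V x ∂μ) / m))) := by
  have hint : Integrable (fun x => u * (V x / m)) μ := (hV.div_const m).const_mul u
  calc |∫ x, f x ∂μ| ≤ ∫ x, a * (m ^ u * (1 - u + u * (V x / m))) ∂μ := by
        have hsum := (((integrable_const (1 - u)).add hint).const_mul (m ^ u)).const_mul a
        refine (Real.norm_eq_abs _).symm.trans_le (norm_integral_le_of_norm_le hsum ?_)
        filter_upwards [hf] with x hx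
        exact hx.trans (mul_le_mul_of_nonneg_left
          (rpow_le_rpow_mul_affine (hV₀ x) hm hu₀ hu₁) ha)
    _ = a * (m ^ u * (μ.real Set.univ * (1 - u) + u * ((∫ x, V x ∂μ) / m))) := by
        rw [integral_const_mul, integral_const_mul, integral_add (integrable_const _) hint,
          integral_const_mul, integral_div, integral_const, smul_eq_mul]
    _ ≤ a * (m ^ u * (1 - u + u * ((∫ x, V x ∂μ) / m))) := by
        gcongr
        exact mul_le_of_le_one_left (sub_nonneg.2 hu₁) hμ

lemma integral_rpow_le_rpow_integral [IsProbabilityMeasure μ] (hV₀ : ∀ x, 0 ≤ V x)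
    (hV : Integrable V μ) (hpos : 0 < ∫ x, V x ∂μ) (hu₀ : 0 ≤ u) (hu₁ : u ≤ 1) :
    ∫ x, V x ^ u ∂μ ≤ (∫ x, V x ∂μ) ^ u := by
  refine (le_abs_self _).trans ((abs_integral_le_of_abs_le_rpow probReal_univ.le hV₀ hV hpos
    hu₀ hu₁ zero_le_one (ae_of_all _ fun x => ?_)).trans_eq ?_)
  · rw [one_mul, abs_of_nonneg (Real.rpow_nonneg (hV₀ x) u)]
  · rw [div_self hpos.ne']
    ring

lemma add_measure_sub_comm (μ ν : Measure X) [IsFiniteMeasure μ] [IsFiniteMeasure ν] :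
    μ + (ν - μ) = ν + (μ - ν) := by
  rw [← Measure.toSignedMeasure_eq_toSignedMeasure_iff, Measure.toSignedMeasure_add,
    Measure.toSignedMeasure_add, add_comm ν.toSignedMeasure, ← sub_eq_sub_iff_add_eq_add]
  exact Measure.sub_toSignedMeasure_eq_toSignedMeasure_sub

lemma integral_sub_integral_eq_integral_measure_sub [IsFiniteMeasure μ] [IsFiniteMeasure ν]
    (hμ : Integrable f μ) (hν : Integrable f ν) :
    ∫ x, f x ∂μ - ∫ x, f x ∂ν = ∫ x, f x ∂(μ - ν) - ∫ x, f x ∂(ν - μ) := by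
  have hsum : ∫ x, f x ∂μ + ∫ x, f x ∂(ν - μ) = ∫ x, f x ∂ν + ∫ x, f x ∂(μ - ν) := by
    rw [← integral_add_measure hμ (hν.mono_measure Measure.sub_le),
      ← integral_add_measure hν (hμ.mono_measure Measure.sub_le), add_measure_sub_comm]
  linarith

/- Tangent line of `x ↦ x ^ u` at `M / 2`: the two parts of the Jordan decomposition of `μ - ν`
have mass at most one each, and their `V`-integrals add up to at most `M`. -/
lemma abs_integral_sub_integral_le_of_wTV_le [IsProbabilityMeasure μ] [IsProbabilityMeasure ν]
    (hV₀ : ∀ x, 0 ≤ V x) (hVμ : Integrable V μ) (hVν : Integrable V ν) (hM : 0 < M)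
    (hw : wTV V μ ν ≤ M) (hu₀ : 0 ≤ u) (hu₁ : u ≤ 1) (ha : 0 ≤ a) (hfμ : Integrable f μ)
    (hfν : Integrable f ν) (hμ : ∀ᵐ x ∂μ, |f x| ≤ a * V x ^ u)
    (hν : ∀ᵐ x ∂ν, |f x| ≤ a * V x ^ u) :
    |∫ x, f x ∂μ - ∫ x, f x ∂ν| ≤ a * (2 * (M / 2) ^ u) := by
  have hpart {μ ν : Measure X} [IsProbabilityMeasure μ] (hV : Integrable V μ)
      (hf : ∀ᵐ x ∂μ, |f x| ≤ a * V x ^ u) : |∫ x, f x ∂(μ - ν)| ≤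
        a * ((M / 2) ^ u * (1 - u + u * ((∫ x, V x ∂(μ - ν)) / (M / 2)))) := by
    have hle : μ - ν ≤ μ := Measure.sub_le
    have hfin := isFiniteMeasure_of_le μ hle
    refine abs_integral_le_of_abs_le_rpow ?_ hV₀ (hV.mono_measure hle) (half_pos hM) hu₀ hu₁ ha
      (ae_mono hle hf)
    exact (ENNReal.toReal_mono (measure_ne_top μ _) (hle _)).trans probReal_univ.le
  have hmass : (∫ x, V x ∂(μ - ν)) / (M / 2) + (∫ x, V x ∂(ν - μ)) / (M / 2) ≤ 2 := by
    rw [← add_div, div_le_iff₀ (half_pos hM), mul_div_cancel₀ M two_ne_zero]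
    exact hw
  rw [integral_sub_integral_eq_integral_measure_sub hfμ hfν]
  calc |∫ x, f x ∂(μ - ν) - ∫ x, f x ∂(ν - μ)|
      ≤ a * ((M / 2) ^ u * (1 - u + u * ((∫ x, V x ∂(μ - ν)) / (M / 2)))) +
        a * ((M / 2) ^ u * (1 - u + u * ((∫ x, V x ∂(ν - μ)) / (M / 2)))) :=
        (abs_sub _ _).trans (add_le_add (hpart hVμ hμ) (hpart hVν hν))
    _ = a * (M / 2) ^ u * (2 * (1 - u) +
          u * ((∫ x, V x ∂(μ - ν)) / (M / 2) + (∫ x, V x ∂(ν - μ)) / (M / 2))) := by ring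
    _ ≤ a * (M / 2) ^ u * (2 * (1 - u) + u * 2) := by gcongr
    _ = a * (2 * (M / 2) ^ u) := by ring

end WeightedTotalVariation

section GeometricErgodicity

variable {X : Type*} [MeasurableSpace X] {Q : Kernel X X} {V f : X → ℝ} {c ρ a u : ℝ}
  {π : Measure X} {K : ℕ}

/-- `V`-geometric ergodicity of a Markov kernel `Q` with invariant probability measure `π`, with
constant `c` and rate `ρ`. -/
structure IsGeometricallyErgodic (Q : Kernel X X) (V : X → ℝ) (c ρ : ℝ) (π : Measure X) :
    Prop where
  measurable : Measurable V
  exp_one_le : ∀ x, Real.exp 1 ≤ V x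
  invariant : Q.Invariant π
  integrable : Integrable V π
  one_le_const : 1 ≤ c
  rate_pos : 0 < ρ
  rate_lt_one : ρ < 1
  wTV_le : ∀ ξ : Measure X, IsProbabilityMeasure ξ → Integrable V ξ → ∀ k : ℕ,
    wTV V (ξ.bind fun x => kIter Q k x) π ≤ c * (∫ x, V x ∂ξ + ∫ x, V x ∂π) * ρ ^ k

lemma rpow_one_div_pow {v : ℝ} (hv : 0 ≤ v) (K i : ℕ) :
    (v ^ (1 / (K : ℝ))) ^ i = v ^ ((i : ℝ) / K) := by
  rw [← Real.rpow_mul_natCast hv, one_div_mul_eq_div]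

lemma natCast_div_le_one {i : ℕ} (hi : i ≤ K) : (i : ℝ) / K ≤ 1 :=
  div_le_one_of_le₀ (by exact_mod_cast hi) K.cast_nonneg

lemma rpow_natCast_div_le_rpow_one_sub {A : ℝ} (hA : 1 ≤ A) {i : ℕ} (hi : i < K) :
    A ^ ((i : ℝ) / K) ≤ A ^ (1 - 1 / (K : ℝ)) := by
  refine Real.rpow_le_rpow_of_exponent_le hA ?_
  rw [le_sub_iff_add_le, ← add_div]
  exact_mod_cast natCast_div_le_one (Nat.succ_le_of_lt hi)

namespace IsGeometricallyErgodic

lemma one_le (hE : IsGeometricallyErgodic Q V c ρ π) (x : X) : 1 ≤ V x :=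
  (Real.one_le_exp zero_le_one).trans (hE.exp_one_le x)

lemma nonneg (hE : IsGeometricallyErgodic Q V c ρ π) (x : X) : 0 ≤ V x :=
  zero_le_one.trans (hE.one_le x)

lemma integrable_rpow (hE : IsGeometricallyErgodic Q V c ρ π) (hu : u ≤ 1) :
    Integrable (fun x => V x ^ u) π := by
  refine hE.integrable.mono' (hE.measurable.pow_const u).aestronglyMeasurable
    (ae_of_all _ fun x => ?_)
  rw [Real.norm_of_nonneg (Real.rpow_nonneg (hE.nonneg x) u)]
  exact Real.rpow_le_self_of_one_le (hE.one_le x) hu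

variable [IsProbabilityMeasure π]

lemma exp_one_le_integral (hE : IsGeometricallyErgodic Q V c ρ π) :
    Real.exp 1 ≤ ∫ x, V x ∂π := by
  simpa using integral_mono (integrable_const _) hE.integrable hE.exp_one_le

lemma one_le_integral (hE : IsGeometricallyErgodic Q V c ρ π) : 1 ≤ ∫ x, V x ∂π :=
  (Real.one_le_exp zero_le_one).trans hE.exp_one_le_integral

lemma integral_le_const_mul (hE : IsGeometricallyErgodic Q V c ρ π) :
    ∫ x, V x ∂π ≤ c * ∫ x, V x ∂π :=
  le_mul_of_one_le_left (zero_le_one.trans hE.one_le_integral) hE.one_le_const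

lemma one_le_const_mul (hE : IsGeometricallyErgodic Q V c ρ π) : 1 ≤ c * ∫ x, V x ∂π :=
  hE.one_le_integral.trans hE.integral_le_const_mul

lemma integral_rpow_le (hE : IsGeometricallyErgodic Q V c ρ π) (hu₀ : 0 ≤ u) (hu₁ : u ≤ 1) :
    ∫ x, V x ^ u ∂π ≤ (c * ∫ x, V x ∂π) ^ u :=
  (integral_rpow_le_rpow_integral hE.nonneg hE.integrable
    (one_pos.trans_le hE.one_le_integral) hu₀ hu₁).trans
    (Real.rpow_le_rpow (zero_le_one.trans hE.one_le_integral) hE.integral_le_const_mul hu₀)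

variable [IsMarkovKernel Q]

lemma ae_abs_integral_kIter_sub_le (hE : IsGeometricallyErgodic Q V c ρ π) (s : ℕ)
    (hu₀ : 0 ≤ u) (hu₁ : u ≤ 1) (ha : 0 ≤ a) (hf : Integrable f π)
    (hfa : ∀ᵐ x ∂π, |f x| ≤ a * V x ^ u) :
    ∀ᵐ x ∂π, |∫ y, f y ∂(kIter Q s x) - ∫ y, f y ∂π| ≤
      a * (2 * ((c * ∫ y, V y ∂π) * V x * ρ ^ s) ^ u) := by
  have hinv := kIter_invariant hE.invariant s
  filter_upwards [ae_integrable_of_invariant hinv hE.integrable,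
    ae_integrable_of_invariant hinv hf, ae_ae_of_invariant hinv hfa] with x hVx hfx hfax
  have hA := one_pos.trans_le hE.one_le_const_mul
  have hx := hE.one_le x
  have hρ := hE.rate_pos
  have hw : wTV V (kIter Q s x) π ≤ 2 * ((c * ∫ y, V y ∂π) * V x * ρ ^ s) := by
    have hsum : V x + ∫ y, V y ∂π ≤ 2 * ((∫ y, V y ∂π) * V x) := by
      nlinarith [hE.one_le_integral]
    have hdirac := hE.wTV_le (Measure.dirac x) inferInstance
      (integrable_dirac' hE.measurable.stronglyMeasurable enorm_lt_top) s
    rw [Measure.dirac_bind (kIter Q s).measurable,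
      integral_dirac' _ _ hE.measurable.stronglyMeasurable] at hdirac
    calc wTV V (kIter Q s x) π ≤ c * (V x + ∫ y, V y ∂π) * ρ ^ s := hdirac
      _ ≤ c * (2 * ((∫ y, V y ∂π) * V x)) * ρ ^ s := by
          have := hE.one_le_const
          gcongr
      _ = 2 * ((c * ∫ y, V y ∂π) * V x * ρ ^ s) := by ring
  simpa only [mul_div_cancel_left₀ _ (two_ne_zero (α := ℝ))] using
    abs_integral_sub_integral_le_of_wTV_le hE.nonneg hVx hE.integrable (by positivity) hw hu₀ hu₁
      ha hfx hf hfax hfa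

lemma ae_abs_integral_kIter_sub_le_pow (hE : IsGeometricallyErgodic Q V c ρ π) {i : ℕ}
    (hi : 1 ≤ i) (hiK : i < K) (ha : 0 ≤ a) (hf : Integrable f π)
    (hfa : ∀ᵐ x ∂π, |f x| ≤ a * V x ^ ((i : ℝ) / K)) (s : ℕ) :
    ∀ᵐ x ∂π, |∫ y, f y ∂(kIter Q s x) - ∫ y, f y ∂π| ≤
      2 * (c * ∫ x, V x ∂π) ^ (1 - 1 / (K : ℝ)) * a * (ρ ^ (1 / (K : ℝ))) ^ s *
        V x ^ ((i : ℝ) / K) := by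
  have hρ := hE.rate_pos
  have hA := hE.one_le_const_mul
  have hrate : (ρ ^ s) ^ ((i : ℝ) / K) ≤ (ρ ^ (1 / (K : ℝ))) ^ s := by
    rw [← Real.rpow_mul_natCast hρ.le, mul_comm, Real.rpow_natCast_mul hρ.le]
    refine Real.rpow_le_rpow_of_exponent_ge (pow_pos hρ s)
      (pow_le_one₀ hρ.le hE.rate_lt_one.le) ?_
    gcongr
    exact_mod_cast hi
  have hconst := rpow_natCast_div_le_rpow_one_sub hA hiK
  filter_upwards [hE.ae_abs_integral_kIter_sub_le s (by positivity) (natCast_div_le_one hiK.le) ha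
    hf hfa] with x hx
  have hx₀ := hE.nonneg x
  rw [Real.mul_rpow (by positivity) (by positivity), Real.mul_rpow (by positivity) hx₀] at hx
  calc |∫ y, f y ∂(kIter Q s x) - ∫ y, f y ∂π|
      ≤ a * (2 * ((c * ∫ y, V y ∂π) ^ ((i : ℝ) / K) * V x ^ ((i : ℝ) / K) *
        (ρ ^ s) ^ ((i : ℝ) / K))) := hx
    _ ≤ a * (2 * ((c * ∫ y, V y ∂π) ^ (1 - 1 / (K : ℝ)) * V x ^ ((i : ℝ) / K) *
        (ρ ^ (1 / (K : ℝ))) ^ s)) := by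
        refine mul_le_mul_of_nonneg_left (mul_le_mul_of_nonneg_left ?_ two_pos.le) ha
        exact mul_le_mul (mul_le_mul_of_nonneg_right hconst (Real.rpow_nonneg hx₀ _)) hrate
          (by positivity) (by positivity)
    _ = _ := by ring

lemma gradedGap (hE : IsGeometricallyErgodic Q V c ρ π) (hK : 1 ≤ K) :
    GradedGap Q π (fun x => V x ^ (1 / (K : ℝ))) K (ρ ^ (1 / (K : ℝ)))
      (2 * (c * ∫ x, V x ∂π) ^ (1 - 1 / (K : ℝ))) (c * ∫ x, V x ∂π) where
  one_le x := Real.one_le_rpow (hE.one_le x) (by positivity)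
  rate_nonneg := Real.rpow_nonneg hE.rate_pos.le _
  rate_lt_one := Real.rpow_lt_one hE.rate_pos.le hE.rate_lt_one (by positivity)
  one_le_const := by
    have hK₁ : 1 / (K : ℝ) ≤ 1 := by simpa using natCast_div_le_one hK
    linarith [Real.one_le_rpow hE.one_le_const_mul (sub_nonneg.2 hK₁)]
  abs_integral_sub_le i hi hiK f hf a ha hfa s := by
    simp only [rpow_one_div_pow (hE.nonneg _)] at hfa ⊢
    exact hE.ae_abs_integral_kIter_sub_le_pow hi hiK ha hf.integrable hfa s
  integrable_pow i hi := by
    simp only [rpow_one_div_pow (hE.nonneg _)]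
    exact hE.integrable_rpow (natCast_div_le_one hi)
  integral_pow_le_const i hi := by
    simp only [rpow_one_div_pow (hE.nonneg _)]
    linarith [hE.integral_rpow_le (u := (i : ℝ) / K) (by positivity) (natCast_div_le_one hi.le),
      rpow_natCast_div_le_rpow_one_sub hE.one_le_const_mul hi,
      Real.rpow_nonneg (zero_le_one.trans hE.one_le_const_mul) (1 - 1 / (K : ℝ))]
  integral_pow_le := by
    have hK₀ : (K : ℝ) ≠ 0 := by exact_mod_cast (one_pos.trans_le hK).ne'
    simpa only [rpow_one_div_pow (hE.nonneg _), div_self hK₀, Real.rpow_one] using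
      hE.integral_le_const_mul

end IsGeometricallyErgodic

end GeometricErgodicity

section Constants

open scoped Nat

lemma add_one_pow_le_exp_one_mul_pow {n : ℕ} (hn : n ≠ 0) :
    ((n : ℝ) + 1) ^ n ≤ Real.exp 1 * (n : ℝ) ^ n := by
  calc ((n : ℝ) + 1) ^ n = (1 / (n : ℝ) + 1) ^ n * (n : ℝ) ^ n := by
        rw [← mul_pow]
        congr 1
        field_simp
        ring
    _ ≤ Real.exp (1 / n) ^ n * (n : ℝ) ^ n := by
        gcongr
        exact Real.add_one_le_exp _
    _ = Real.exp 1 * (n : ℝ) ^ n := by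
        rw [← Real.exp_nat_mul, mul_one_div_cancel (by positivity)]

lemma div_exp_one_pow_le_factorial (n : ℕ) : ((n : ℝ) / Real.exp 1) ^ n ≤ (n ! : ℝ) := by
  rw [div_pow, ← Real.exp_nat_mul, mul_one, div_le_comm₀ (by positivity) (by positivity)]
  exact Real.pow_div_factorial_le_exp n n.cast_nonneg n

lemma factorial_mul_pow_mul_four_pow_le (k : ℕ) :
    ((k + 3)! : ℝ) * ((k : ℝ) + 3) ^ (k + 2) * (4 ^ (k + 3) / 9) * (4 / 15) * (4 / 3) ^ k ≤
      5 / 2 * (((k + 3)! : ℝ) / 2) ^ 3 * 2 ^ (k + 1) := by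
  rcases Nat.lt_or_ge k 3 with hk | hk
  · interval_cases k <;> norm_num [Nat.factorial]
  induction k, hk using Nat.le_induction with
  | base => norm_num [Nat.factorial]
  | succ k hk ih =>
    have hk' : (3 : ℝ) ≤ k := by exact_mod_cast hk
    have hfact : ((k + 1 + 3)! : ℝ) = (k + 4) * ((k + 3)! : ℝ) := by
      rw [show k + 1 + 3 = k + 3 + 1 by ring, Nat.factorial_succ]
      push_cast
      ring
    have hpow : ((k : ℝ) + 4) ^ (k + 3) ≤ Real.exp 1 * ((k : ℝ) + 3) ^ (k + 3) := by
      have h := add_one_pow_le_exp_one_mul_pow (k + 2).succ_ne_zero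
      push_cast [Nat.succ_eq_add_one] at h
      ring_nf at h ⊢
      exact h
    have hstep : 16 / 3 * Real.exp 1 * ((k : ℝ) + 3) ≤ 2 * (k + 4) ^ 2 := by
      nlinarith [Real.exp_one_lt_d9]
    rw [hfact, show ((k + 1 : ℕ) : ℝ) + 3 = k + 4 by push_cast; ring]
    calc ((k : ℝ) + 4) * ((k + 3)! : ℝ) * (k + 4) ^ (k + 1 + 2) * (4 ^ (k + 1 + 3) / 9) *
          (4 / 15) * (4 / 3) ^ (k + 1)
        = (k + 4) * ((k + 3)! : ℝ) * ((k : ℝ) + 4) ^ (k + 3) * (4 ^ (k + 3) / 9) *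
            (4 / 15) * (4 / 3) ^ k * (16 / 3) := by ring
      _ ≤ (k + 4) * ((k + 3)! : ℝ) * (Real.exp 1 * ((k : ℝ) + 3) ^ (k + 3)) * (4 ^ (k + 3) / 9) *
            (4 / 15) * (4 / 3) ^ k * (16 / 3) := by gcongr
      _ = (k + 4) * (16 / 3 * Real.exp 1 * ((k : ℝ) + 3)) *
            (((k + 3)! : ℝ) * ((k : ℝ) + 3) ^ (k + 2) * (4 ^ (k + 3) / 9) *
              (4 / 15) * (4 / 3) ^ k) := by ring
      _ ≤ (k + 4) * (2 * (k + 4) ^ 2) * (5 / 2 * (((k + 3)! : ℝ) / 2) ^ 3 * 2 ^ (k + 1)) := by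
          gcongr
      _ = 5 / 2 * (((k : ℝ) + 4) * ((k + 3)! : ℝ) / 2) ^ 3 * 2 ^ (k + 1 + 1) := by ring

lemma log_le_div_exp_one {x : ℝ} (hx : 0 < x) : Real.log x ≤ x / Real.exp 1 := by
  have h := Real.log_le_sub_one_of_pos (div_pos hx (Real.exp_pos 1))
  rw [Real.log_div hx.ne' (Real.exp_pos 1).ne', Real.log_exp] at h
  linarith

lemma one_div_eight_mul_sq_rpow_self_le {x : ℝ} (hx : 0 < x) : (1 / (8 * x ^ 2)) ^ x ≤ 4 / 3 := by
  have hsqrt : (2.8 : ℝ) ≤ √8 := Real.le_sqrt_of_sq_le (by norm_num)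
  have hsq : 1 / (8 * x ^ 2) = (1 / (√8 * x)) ^ 2 := by
    rw [div_pow, mul_pow, Real.sq_sqrt (by norm_num), one_pow]
  rw [Real.rpow_def_of_pos (by positivity), ← Real.le_log_iff_exp_le (by norm_num)]
  calc Real.log (1 / (8 * x ^ 2)) * x = 2 * Real.log (1 / (√8 * x)) * x := by
        rw [hsq, Real.log_pow, Nat.cast_ofNat]
    _ ≤ 2 * (1 / (√8 * x) / Real.exp 1) * x := by
        gcongr
        exact log_le_div_exp_one (by positivity)
    _ = 2 / (√8 * Real.exp 1) := by field_simp
    _ ≤ 2 / 7 := by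
        gcongr
        nlinarith [Real.exp_one_gt_d9]
    _ = 2 * (1 / 3) / (1 / 3 + 2) := by norm_num
    _ ≤ Real.log (1 + 1 / 3) := Real.le_log_one_add_of_nonneg (by norm_num)
    _ = Real.log (4 / 3) := by norm_num

lemma eight_mul_cube_rpow {γ : ℝ} (hγ : 0 ≤ γ) :
    (8 * γ ^ 3) ^ γ = 2 ^ (3 * γ) * γ ^ (3 * γ) := by
  rw [Real.mul_rpow (by norm_num) (by positivity), Real.rpow_mul zero_le_two, Real.rpow_mul hγ]
  norm_num

lemma mul_div_exp_one_rpow_pow_le {γ : ℝ} (hγ : 0 ≤ γ) (k : ℕ) :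
    ((γ * ((k : ℝ) + 3) / Real.exp 1) ^ γ) ^ (k + 3) ≤
      (4 / 3) ^ k * (((k + 3)! : ℝ) / 2) ^ γ * (2 ^ (3 * γ) * γ ^ (3 * γ)) ^ (k + 1) := by
  rcases hγ.eq_or_lt with rfl | hγ
  · simpa using one_le_pow₀ (n := k) (by norm_num : (1 : ℝ) ≤ 4 / 3)
  have hbase : (γ * ((k : ℝ) + 3) / Real.exp 1) ^ (k + 3) ≤
      (1 / (8 * γ ^ 2)) ^ k * (((k + 3)! : ℝ) / 2) * (8 * γ ^ 3) ^ (k + 1) := by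
    have hstirling := div_exp_one_pow_le_factorial (k + 3)
    push_cast at hstirling
    calc (γ * ((k : ℝ) + 3) / Real.exp 1) ^ (k + 3)
        = γ ^ (k + 3) * (((k : ℝ) + 3) / Real.exp 1) ^ (k + 3) := by rw [← mul_pow, mul_div_assoc]
      _ ≤ γ ^ (k + 3) * (4 * ((k + 3)! : ℝ)) := by
          gcongr
          linarith [show (0 : ℝ) < (k + 3)! by positivity]
      _ = (1 / (8 * γ ^ 2)) ^ k * (((k + 3)! : ℝ) / 2) * (8 * γ ^ 3) ^ (k + 1) := by
          rw [one_div, inv_pow, mul_pow, mul_pow]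
          field_simp
          ring
  calc ((γ * ((k : ℝ) + 3) / Real.exp 1) ^ γ) ^ (k + 3)
      = ((γ * ((k : ℝ) + 3) / Real.exp 1) ^ (k + 3)) ^ γ := Real.rpow_pow_comm (by positivity) _ _
    _ ≤ ((1 / (8 * γ ^ 2)) ^ k * (((k + 3)! : ℝ) / 2) * (8 * γ ^ 3) ^ (k + 1)) ^ γ := by gcongr
    _ = ((1 / (8 * γ ^ 2)) ^ γ) ^ k * (((k + 3)! : ℝ) / 2) ^ γ *
          (2 ^ (3 * γ) * γ ^ (3 * γ)) ^ (k + 1) := by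
        rw [Real.mul_rpow (by positivity) (by positivity), Real.mul_rpow (by positivity)
          (by positivity), ← Real.rpow_pow_comm (by positivity), ← Real.rpow_pow_comm
          (by positivity), eight_mul_cube_rpow hγ.le]
    _ ≤ _ := by
        gcongr
        exact one_div_eight_mul_sq_rpow_self_le hγ

lemma one_div_one_sub_exp_neg_le {x : ℝ} (hx : 0 < x) :
    1 / (1 - Real.exp (-x)) ≤ Real.exp (x / 2) / x := by
  have hpos : 0 < 1 - Real.exp (-x) := sub_pos.2 (Real.exp_lt_one_iff.2 (neg_lt_zero.2 hx))
  have hsinh := Real.self_le_sinh_iff.2 (half_pos hx).le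
  rw [Real.sinh_eq] at hsinh
  rw [div_le_div_iff₀ hpos hx, mul_sub, ← Real.exp_add, show x / 2 + -x = -(x / 2) by ring]
  linarith

lemma one_div_one_sub_rpow_pow_le {ρ : ℝ} (hρ₀ : 0 < ρ) (hρ₁ : ρ < 1) (k : ℕ) :
    (1 / (1 - ρ ^ (1 / ((k : ℝ) + 3)))) ^ (k + 2) ≤
      ρ ^ (-(1 : ℝ) / 2) * (((k : ℝ) + 3) / Real.log (1 / ρ)) ^ (k + 2) := by
  have hL : 0 < Real.log (1 / ρ) := Real.log_pos ((one_lt_div hρ₀).2 hρ₁)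
  obtain ⟨x, hx_def⟩ : ∃ x, x = Real.log (1 / ρ) / ((k : ℝ) + 3) := ⟨_, rfl⟩
  have hx : 0 < x := hx_def ▸ by positivity
  have hlog : Real.log ρ = -(x * (k + 3)) := by
    rw [hx_def, div_mul_cancel₀ _ (by positivity), one_div, Real.log_inv, neg_neg]
  have hq : ρ ^ (1 / ((k : ℝ) + 3)) = Real.exp (-x) := by
    rw [Real.rpow_def_of_pos hρ₀, hlog]
    congr 1
    field_simp
  have hR : ρ ^ (-(1 : ℝ) / 2) = Real.exp (x * (k + 3) / 2) := by
    rw [Real.rpow_def_of_pos hρ₀, hlog]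
    ring_nf
  calc (1 / (1 - ρ ^ (1 / ((k : ℝ) + 3)))) ^ (k + 2)
      ≤ (Real.exp (x / 2) / x) ^ (k + 2) := by
        rw [hq]
        refine pow_le_pow_left₀ (one_div_nonneg.2 (sub_nonneg.2 ?_))
          (one_div_one_sub_exp_neg_le hx) _
        exact Real.exp_le_one_iff.2 (neg_nonpos.2 hx.le)
    _ = Real.exp (x * (k + 2) / 2) * (1 / x) ^ (k + 2) := by
        rw [div_eq_mul_one_div, mul_pow, ← Real.exp_nat_mul]
        push_cast
        ring_nf
    _ ≤ Real.exp (x * (k + 3) / 2) * (1 / x) ^ (k + 2) := by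
        gcongr
        norm_num
    _ = ρ ^ (-(1 : ℝ) / 2) * (((k : ℝ) + 3) / Real.log (1 / ρ)) ^ (k + 2) := by
        rw [hR, hx_def, one_div_div]

lemma two_div_rpow_pow_le {C₀ : ℝ} (hC₀ : 2 * Real.exp 1 ≤ C₀) (k : ℕ) :
    ((2 / C₀) ^ (1 / ((k : ℝ) + 3))) ^ (k + 2) ≤ 8 / 15 := by
  have hC : 0 < C₀ := by linarith [Real.exp_pos 1]
  have hinv : 2 / C₀ ≤ Real.exp (-1) := by
    rw [Real.exp_neg, div_le_iff₀ hC, inv_mul_eq_div, le_div_iff₀ (Real.exp_pos 1)]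
    linarith
  have hexp : Real.exp (-(2 / 3)) ≤ 8 / 15 := by
    refine le_of_pow_le_pow_left₀ three_ne_zero (by norm_num) ?_
    rw [← Real.exp_nat_mul, show ((3 : ℕ) : ℝ) * -(2 / 3) = -(1 + 1) by norm_num, Real.exp_neg,
      Real.exp_add, inv_le_comm₀ (by positivity) (by norm_num)]
    norm_num
    nlinarith [Real.exp_one_gt_d9]
  calc ((2 / C₀) ^ (1 / ((k : ℝ) + 3))) ^ (k + 2)
      ≤ (Real.exp (-1) ^ (1 / ((k : ℝ) + 3))) ^ (k + 2) := by gcongr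
    _ = Real.exp (-((k + 2) / (k + 3))) := by
        rw [← Real.exp_mul, ← Real.exp_nat_mul]
        push_cast
        ring_nf
    _ ≤ Real.exp (-(2 / 3)) := by
        refine Real.exp_le_exp.2 (neg_le_neg ?_)
        rw [div_le_div_iff₀ (by norm_num) (by positivity)]
        linarith [(k.cast_nonneg : (0 : ℝ) ≤ k)]
    _ ≤ 8 / 15 := hexp

lemma gap_constant_pow_mul_le {C₀ : ℝ} (hC₀ : 2 * Real.exp 1 ≤ C₀) (k : ℕ) :
    (2 ^ (1 / ((k : ℝ) + 3)) * C₀ ^ (1 - 1 / ((k : ℝ) + 3))) ^ (k + 2) * (C₀ / 2) ≤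
      4 / 15 * C₀ ^ (k + 3) := by
  have hC : 0 < C₀ := by linarith [Real.exp_pos 1]
  calc (2 ^ (1 / ((k : ℝ) + 3)) * C₀ ^ (1 - 1 / ((k : ℝ) + 3))) ^ (k + 2) * (C₀ / 2)
      = C₀ ^ (k + 2) * ((2 / C₀) ^ (1 / ((k : ℝ) + 3))) ^ (k + 2) * (C₀ / 2) := by
        rw [Real.rpow_sub hC, Real.rpow_one, Real.div_rpow zero_le_two hC.le, ← mul_pow]
        ring
    _ ≤ C₀ ^ (k + 2) * (8 / 15) * (C₀ / 2) := by
        gcongr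
        exact two_div_rpow_pow_le hC₀ k
    _ = 4 / 15 * C₀ ^ (k + 3) := by ring

lemma cumulant_constant_mul_factorial_le {ρ C₀ G γ : ℝ} (hρ₀ : 0 < ρ) (hρ₁ : ρ < 1)
    (hC₀ : 2 * Real.exp 1 ≤ C₀) (hG : 0 ≤ G) (hγ : 0 ≤ γ) (k : ℕ) {q C b : ℝ}
    (hq : q = ρ ^ (1 / ((k : ℝ) + 3)))
    (hC : C = 2 ^ (1 / ((k : ℝ) + 3)) * C₀ ^ (1 - 1 / ((k : ℝ) + 3)))
    (hb : b = G * (γ * ((k : ℝ) + 3) / Real.exp 1) ^ γ) :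
    ((k : ℝ) + 3) * (C₀ / 2) * ((1 - q) / (9 * C)) * (4 * C * b / (1 - q)) ^ (k + 3) *
        ((k + 2)! : ℝ) ≤
      5 / 2 * (((k + 3)! : ℝ) / 2) ^ (γ + 3) * (ρ ^ (-(1 : ℝ) / 2) * C₀ ^ (k + 3) *
        G ^ (k + 3) / Real.log (1 / ρ) ^ (k + 2) *
        (2 * (2 ^ (3 * γ) * γ ^ (3 * γ))) ^ (k + 1)) := by
  have hC₀' : 0 < C₀ := by linarith [Real.exp_pos 1]
  have hq₁ : 0 < 1 - q := hq ▸ sub_pos.2 (Real.rpow_lt_one hρ₀.le hρ₁ (by positivity))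
  have hC' : 0 < C := hC ▸ by positivity
  have hL : 0 < Real.log (1 / ρ) := Real.log_pos ((one_lt_div hρ₀).2 hρ₁)
  have hgap : (1 / (1 - q)) ^ (k + 2) ≤ _ := hq ▸ one_div_one_sub_rpow_pow_le hρ₀ hρ₁ k
  have hCpow : C ^ (k + 2) * (C₀ / 2) ≤ _ := hC ▸ gap_constant_pow_mul_le hC₀ k
  have hfact : ((k + 3)! : ℝ) = (k + 3) * ((k + 2)! : ℝ) := by
    exact_mod_cast Nat.factorial_succ (k + 2)
  have hgap_split : (1 - q) * (4 * C * b / (1 - q)) ^ (k + 3) =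
      (1 / (1 - q)) ^ (k + 2) * (4 * C * b) ^ (k + 3) := by
    rw [div_pow, one_div, inv_pow, pow_succ (1 - q)]
    field_simp
  set L := Real.log (1 / ρ)
  set R := ρ ^ (-(1 : ℝ) / 2)
  set B := (2 : ℝ) ^ (3 * γ) * γ ^ (3 * γ) with hB
  set F := (((k + 3)! : ℝ) / 2) ^ γ with hF
  have hB₀ : 0 ≤ B := mul_nonneg (by positivity) (Real.rpow_nonneg hγ _)
  calc ((k : ℝ) + 3) * (C₀ / 2) * ((1 - q) / (9 * C)) * (4 * C * b / (1 - q)) ^ (k + 3) *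
          ((k + 2)! : ℝ)
      = ((k + 3)! : ℝ) * (4 ^ (k + 3) / 9) * (1 / (1 - q)) ^ (k + 2) *
          (C ^ (k + 2) * (C₀ / 2)) * G ^ (k + 3) *
          ((γ * ((k : ℝ) + 3) / Real.exp 1) ^ γ) ^ (k + 3) := by
        rw [mul_assoc _ (_ / _), div_mul_eq_mul_div, hgap_split, hb, hfact]
        field_simp
        ring
    _ ≤ ((k + 3)! : ℝ) * (4 ^ (k + 3) / 9) * (R * (((k : ℝ) + 3) / L) ^ (k + 2)) *
          (4 / 15 * C₀ ^ (k + 3)) * G ^ (k + 3) * ((4 / 3) ^ k * F * B ^ (k + 1)) := by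
        gcongr ((k + 3)! : ℝ) * (4 ^ (k + 3) / 9) * ?_ * ?_ * G ^ (k + 3) * ?_
        exact mul_div_exp_one_rpow_pow_le hγ k
    _ = (((k + 3)! : ℝ) * ((k : ℝ) + 3) ^ (k + 2) * (4 ^ (k + 3) / 9) * (4 / 15) * (4 / 3) ^ k) *
          (R * C₀ ^ (k + 3) * G ^ (k + 3) / L ^ (k + 2) * F * B ^ (k + 1)) := by
        rw [div_pow]
        ring
    _ ≤ (5 / 2 * (((k + 3)! : ℝ) / 2) ^ 3 * 2 ^ (k + 1)) *
          (R * C₀ ^ (k + 3) * G ^ (k + 3) / L ^ (k + 2) * F * B ^ (k + 1)) :=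
        mul_le_mul_of_nonneg_right (factorial_mul_pow_mul_four_pow_le k) (by positivity)
    _ = _ := by
        rw [Real.rpow_add (by positivity), ← hF, Real.rpow_ofNat, mul_pow 2 B]
        ring

/-- The constant `J_n` of the Bernstein inequality, with `G` standing for `‖ḡ‖_{W^γ}` and `σ2`
for `Var_π(S_n)`. -/
def bernsteinScale (n : ℕ) (ρ C₀ G γ σ2 : ℝ) : ℝ :=
  max (n * ρ ^ (-(1 : ℝ) / 2) * (Real.log (1 / ρ))⁻¹ * C₀ ^ 2 * G ^ 2 / σ2) 1 *
    (2 ^ (1 + 3 * γ) * γ ^ (3 * γ) * C₀ * G / Real.log (1 / ρ))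

lemma bernsteinScale_pos (n : ℕ) {ρ C₀ G γ σ2 : ℝ} (hρ₀ : 0 < ρ) (hρ₁ : ρ < 1) (hC₀ : 0 < C₀)
    (hG : 0 < G) (hγ : 0 ≤ γ) : 0 < bernsteinScale n ρ C₀ G γ σ2 := by
  have hL : 0 < Real.log (1 / ρ) := Real.log_pos ((one_lt_div hρ₀).2 hρ₁)
  have hγγ : 0 < γ ^ (3 * γ) := by
    rcases hγ.eq_or_lt with rfl | hγ
    · simp
    · positivity
  rw [bernsteinScale]
  positivity

lemma mul_le_mul_bernsteinScale_pow (n : ℕ) {ρ C₀ G γ σ2 : ℝ} (hρ₀ : 0 < ρ) (hρ₁ : ρ < 1)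
    (hC₀ : 0 < C₀) (hG : 0 ≤ G) (hγ : 0 ≤ γ) (hσ : 0 < σ2) (k : ℕ) :
    n * (ρ ^ (-(1 : ℝ) / 2) * C₀ ^ (k + 3) * G ^ (k + 3) / Real.log (1 / ρ) ^ (k + 2) *
        (2 * (2 ^ (3 * γ) * γ ^ (3 * γ))) ^ (k + 1)) ≤
      σ2 * bernsteinScale n ρ C₀ G γ σ2 ^ (k + 1) := by
  have hL : 0 < Real.log (1 / ρ) := Real.log_pos ((one_lt_div hρ₀).2 hρ₁)
  have hγγ : 0 ≤ γ ^ (3 * γ) := Real.rpow_nonneg hγ _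
  rw [bernsteinScale, Real.rpow_add two_pos, Real.rpow_one, mul_pow (max _ _)]
  set L := Real.log (1 / ρ)
  set M := n * ρ ^ (-(1 : ℝ) / 2) * L⁻¹ * C₀ ^ 2 * G ^ 2 / σ2 with hM
  calc n * (ρ ^ (-(1 : ℝ) / 2) * C₀ ^ (k + 3) * G ^ (k + 3) / L ^ (k + 2) *
          (2 * (2 ^ (3 * γ) * γ ^ (3 * γ))) ^ (k + 1))
      = σ2 * (M * (2 * 2 ^ (3 * γ) * γ ^ (3 * γ) * C₀ * G / L) ^ (k + 1)) := by
        rw [hM, div_pow, mul_pow _ G, mul_pow _ C₀, ← mul_assoc (2 : ℝ)]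
        field_simp
        ring
    _ ≤ σ2 * (max M 1 ^ (k + 1) * (2 * 2 ^ (3 * γ) * γ ^ (3 * γ) * C₀ * G / L) ^ (k + 1)) := by
        gcongr ?_ * (?_ * ?_)
        exact (le_max_left M 1).trans (le_self_pow₀ (le_max_right M 1) k.succ_ne_zero)

lemma log_rpow_le {v K γ : ℝ} (hv : 1 ≤ v) (hK : 0 < K) (hγ : 0 ≤ γ) :
    Real.log v ^ γ ≤ (γ * K / Real.exp 1) ^ γ * v ^ (1 / K) := by
  have hv₀ : 0 < v := by linarith
  rcases hγ.eq_or_lt with rfl | hγ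
  · simpa using Real.one_le_rpow hv (by positivity : 0 ≤ 1 / K)
  have hlog : Real.log v ≤ γ * K / Real.exp 1 * v ^ (1 / (γ * K)) :=
    calc Real.log v = γ * K * Real.log (v ^ (1 / (γ * K))) := by
          rw [Real.log_rpow hv₀]
          field_simp
      _ ≤ γ * K * (v ^ (1 / (γ * K)) / Real.exp 1) := by
          gcongr
          exact log_le_div_exp_one (by positivity)
      _ = γ * K / Real.exp 1 * v ^ (1 / (γ * K)) := by ring
  calc Real.log v ^ γ ≤ (γ * K / Real.exp 1 * v ^ (1 / (γ * K))) ^ γ := by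
        gcongr
        exact Real.log_nonneg hv
    _ = (γ * K / Real.exp 1) ^ γ * v ^ (1 / K) := by
        rw [Real.mul_rpow (by positivity) (by positivity), ← Real.rpow_mul hv₀.le]
        congr 2
        field_simp

end Constants

section WeightedSupNorm

variable {Y : Type*} [MeasurableSpace Y] {U g : Y → ℝ}

lemma MemL.abs_le_vnorm_mul (hg : MemL U g) {x : Y} (hU : 0 < U x) :
    |g x| ≤ vnorm U g * U x := by
  rw [← div_le_iff₀ hU]
  exact le_ciSup hg.bdd x

lemma MemL.sub_const (hg : MemL U g) (hU : ∀ x, 1 ≤ U x) (a : ℝ) :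
    MemL U fun x => g x - a := by
  obtain ⟨B, hB⟩ := hg.bdd
  refine ⟨hg.meas.sub_const a, B + |a|, ?_⟩
  rintro _ ⟨x, rfl⟩
  calc |g x - a| / U x ≤ (|g x| + |a|) / U x :=
        div_le_div_of_nonneg_right (abs_sub _ _) (zero_le_one.trans (hU x))
    _ = |g x| / U x + |a| / U x := add_div _ _ _
    _ ≤ B + |a| := add_le_add (hB ⟨x, rfl⟩) (div_le_self (abs_nonneg a) (hU x))

lemma vnorm_nonneg {Y : Type*} {U : Y → ℝ} (hU : ∀ x, 0 ≤ U x) (g : Y → ℝ) : 0 ≤ vnorm U g :=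
  Real.iSup_nonneg fun x => div_nonneg (abs_nonneg _) (hU x)

lemma MemL.vnorm_pos (hg : MemL U g) (hU : ∀ x, 0 < U x) {x : Y} (hx : g x ≠ 0) :
    0 < vnorm U g :=
  pos_of_mul_pos_left ((abs_pos.2 hx).trans_le (hg.abs_le_vnorm_mul (hU x))) (hU x).le

end WeightedSupNorm

section CumulantSeries

open scoped Nat

variable {X Ω : Type*} [MeasurableSpace X] [MeasurableSpace Ω] {Q : Kernel X X}
  {V h : X → ℝ} {c ρ G γ : ℝ} {π : Measure X} {P : Measure Ω} {Xs : ℕ → Ω → X}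

lemma IsLogDerivCoeff.of_derivative_eq {L F : PowerSeries ℝ} (hF₀ : PowerSeries.coeff 0 F = 1)
    (hF : PowerSeries.derivative ℝ F = L * F) :
    IsLogDerivCoeff (fun i => PowerSeries.coeff i L) (fun i => PowerSeries.coeff i F) where
  zero := hF₀
  succ p := by
    rw [← Finset.Nat.sum_antidiagonal_eq_sum_range_succ
        (fun i j => PowerSeries.coeff i L * PowerSeries.coeff j F), ← PowerSeries.coeff_mul, ← hF,
      PowerSeries.coeff_derivative, mul_comm]

/-- The formal logarithmic derivative of the Laplace transform of the partial sum of `n` terms: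
its coefficient of order `j` is the cumulant of order `j + 1`, divided by `j!`. -/
def cumulantSeries (Q : Kernel X X) (π : Measure X) (h : X → ℝ) (n : ℕ) : PowerSeries ℝ :=
  ∑ j ∈ range n, PowerSeries.derivative ℝ (normalizer Q π h j) * (normalizer Q π h j)⁻¹

lemma IsMarkovChain.isLogDerivCoeff_cumulantSeries [IsMarkovKernel Q] [IsProbabilityMeasure π]
    [IsProbabilityMeasure P] (hX : IsMarkovChain P Xs π Q) (hQ : Q.Invariant π)
    (hh : HasAllMoments h π) (n : ℕ) :
    IsLogDerivCoeff (fun i => PowerSeries.coeff i (cumulantSeries Q π h n))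
      (fun i => PowerSeries.coeff i (partialSumLaplace P Xs h n)) := by
  refine .of_derivative_eq (by simp [coeff_partialSumLaplace]) ?_
  rw [hX.partialSumLaplace_eq_prod hQ hh]
  exact derivative_prod_eq_sum_mul_prod n normalizer_mul_inv

lemma IsMarkovChain.integral_sum_eq_zero [IsProbabilityMeasure π] [IsProbabilityMeasure P]
    (hX : IsMarkovChain P Xs π Q) (hQ : Q.Invariant π) (hh : HasAllMoments h π)
    (hh₀ : ∫ x, h x ∂π = 0) (n : ℕ) : ∫ ω, ∑ j ∈ range n, h (Xs j ω) ∂P = 0 := by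
  have hmap := hX.map_eq_of_invariant hQ
  rw [integral_finsetSum _ fun j _ => (hh.comp (hX.meas j) (hmap j)).integrable]
  refine sum_eq_zero fun j _ => ?_
  rw [← integral_map (hX.meas j).aemeasurable hh.measurable.aestronglyMeasurable, hmap j, hh₀]

lemma HasAllMoments.measureReal_le_abs_mul_pow_le {S : Ω → ℝ} [IsFiniteMeasure P]
    (hS : HasAllMoments S P) {t : ℝ} (ht : 0 ≤ t) (q : ℕ) :
    P.real {ω | t ≤ |S ω|} * t ^ (2 * q) ≤ ∫ ω, S ω ^ (2 * q) ∂P := by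
  have heven (ω : Ω) : 0 ≤ S ω ^ (2 * q) := (even_two_mul q).pow_nonneg _
  have hsub : {ω | t ≤ |S ω|} ⊆ {ω | t ^ (2 * q) ≤ S ω ^ (2 * q)} :=
    fun ω (hω : t ≤ |S ω|) => show t ^ (2 * q) ≤ S ω ^ (2 * q) from
      (pow_le_pow_left₀ ht hω _).trans_eq ((even_two_mul q).pow_abs _)
  calc P.real {ω | t ≤ |S ω|} * t ^ (2 * q)
      ≤ P.real {ω | t ^ (2 * q) ≤ S ω ^ (2 * q)} * t ^ (2 * q) :=
        mul_le_mul_of_nonneg_right (measureReal_mono hsub) (pow_nonneg ht _)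
    _ ≤ ∫ ω, S ω ^ (2 * q) ∂P := by
        rw [mul_comm]
        exact mul_meas_ge_le_integral_of_nonneg (ae_of_all _ heven) (hS.pow _).integrable _

lemma le_mul_rpow_of_le_mul_log_rpow {y v K : ℝ} (hv : 1 ≤ v) (hG : 0 ≤ G) (hγ : 0 ≤ γ)
    (hy : y ≤ G * Real.log v ^ γ) (hK : 0 < K) :
    y ≤ G * (γ * K / Real.exp 1) ^ γ * v ^ (1 / K) := by
  rw [mul_assoc]
  exact hy.trans (mul_le_mul_of_nonneg_left (log_rpow_le hv hK hγ) hG)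

namespace IsGeometricallyErgodic

lemma hasAllMoments (hE : IsGeometricallyErgodic Q V c ρ π) (hm : Measurable h) (hG : 0 ≤ G)
    (hγ : 0 ≤ γ) (hh : ∀ x, |h x| ≤ G * Real.log (V x) ^ γ) : HasAllMoments h π := by
  refine .of_integrable_pow hm fun p hp => ?_
  refine (hE.integrable.const_mul ((G * (γ * p / Real.exp 1) ^ γ) ^ p)).mono'
    (hm.abs.pow_const p).aestronglyMeasurable (ae_of_all _ fun x => ?_)
  have hle := le_mul_rpow_of_le_mul_log_rpow (hE.one_le x) hG hγ (hh x)
    (Nat.cast_pos.2 hp.bot_lt)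
  rw [Real.norm_of_nonneg (by positivity)]
  refine (pow_le_pow_left₀ (abs_nonneg _) hle p).trans_eq ?_
  rw [mul_pow, one_div, Real.rpow_inv_natCast_pow (hE.nonneg x) hp]

lemma one_le_log_rpow (hE : IsGeometricallyErgodic Q V c ρ π) (hγ : 0 ≤ γ) (x : X) :
    1 ≤ Real.log (V x) ^ γ :=
  Real.one_le_rpow ((Real.le_log_iff_exp_le (one_pos.trans_le (hE.one_le x))).2 (hE.exp_one_le x))
    hγ

lemma integral_sub_integral_eq_zero {g : X → ℝ} [IsProbabilityMeasure π]
    (hE : IsGeometricallyErgodic Q V c ρ π) (hγ : 0 ≤ γ)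
    (hg : MemL (fun x => Real.log (V x) ^ γ) g) : ∫ x, (g x - ∫ y, g y ∂π) ∂π = 0 := by
  have hW (x : X) : 0 < Real.log (V x) ^ γ := one_pos.trans_le (hE.one_le_log_rpow hγ x)
  have hint := (hE.hasAllMoments hg.meas (vnorm_nonneg (fun x => (hW x).le) g) hγ
    fun x => hg.abs_le_vnorm_mul (hW x)).integrable
  rw [integral_sub hint (integrable_const _), integral_const, probReal_univ, one_smul, sub_self]

variable [IsMarkovKernel Q] [IsProbabilityMeasure π]

lemma abs_coeff_cumulantSeries_le (hE : IsGeometricallyErgodic Q V c ρ π)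
    (hh : HasAllMoments h π) (hh₀ : ∫ x, h x ∂π = 0) {k : ℕ} {q C b : ℝ}
    (hq : q = ρ ^ (1 / ((k : ℝ) + 3)))
    (hC : C = 2 ^ (1 / ((k : ℝ) + 3)) * (2 * c * ∫ x, V x ∂π) ^ (1 - 1 / ((k : ℝ) + 3)))
    (hb : 0 < b) (hhb : ∀ x, |h x| ≤ b * V x ^ (1 / ((k : ℝ) + 3))) (n : ℕ) :
    |PowerSeries.coeff (k + 2) (cumulantSeries Q π h n)| ≤
      n * (((k : ℝ) + 3) * ((2 * c * ∫ x, V x ∂π) / 2) * ((1 - q) / (9 * C)) *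
        (4 * C * b / (1 - q)) ^ (k + 3)) := by
  have hcast : ((k + 2 + 1 : ℕ) : ℝ) = k + 3 := by push_cast; ring
  have hC' : C = 2 * (c * ∫ x, V x ∂π) ^ (1 - 1 / ((k : ℝ) + 3)) := by
    have hA := zero_le_one.trans hE.one_le_const_mul
    rw [hC, mul_assoc, Real.mul_rpow two_pos.le hA, ← mul_assoc, ← Real.rpow_add two_pos,
      add_sub_cancel, Real.rpow_one]
  have hgap : GradedGap Q π (fun x => V x ^ (1 / ((k : ℝ) + 3))) (k + 2 + 1) q C
      (c * ∫ x, V x ∂π) := by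
    simpa only [hcast, ← hq, ← hC'] using hE.gradedGap (Nat.le_add_left 1 (k + 2))
  rw [cumulantSeries, map_sum]
  refine (abs_sum_le_sum_abs _ _).trans ((sum_le_card_nsmul _ _ _ fun j _ =>
    hgap.abs_coeff_derivative_normalizer_mul_inv_le hE.invariant hh hh₀ hb
      (ae_of_all _ hhb) j).trans_eq ?_)
  rw [card_range, nsmul_eq_mul]
  push_cast
  ring

lemma cumulantBounds [IsProbabilityMeasure P] (hE : IsGeometricallyErgodic Q V c ρ π)
    (hX : IsMarkovChain P Xs π Q) (hm : Measurable h) (hG : 0 < G) (hγ : 0 ≤ γ)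
    (hh : ∀ x, |h x| ≤ G * Real.log (V x) ^ γ) (hh₀ : ∫ x, h x ∂π = 0) {n : ℕ} {σ2 : ℝ}
    (hσ : σ2 = ∫ ω, (∑ j ∈ range n, h (Xs j ω)) ^ 2 ∂P) (hσ₀ : 0 < σ2) :
    CumulantBounds (γ + 3) σ2 (bernsteinScale n ρ (2 * c * ∫ x, V x ∂π) G γ σ2)
      fun i => PowerSeries.coeff i (cumulantSeries Q π h n) := by
  have hmom := hE.hasAllMoments hm hG.le hγ hh
  have hlog := hX.isLogDerivCoeff_cumulantSeries hE.invariant hmom n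
  have hzero : PowerSeries.coeff 0 (cumulantSeries Q π h n) = 0 := by
    rw [← hlog.coeff_one, coeff_partialSumLaplace]
    simp only [pow_one, hX.integral_sum_eq_zero hE.invariant hmom hh₀, zero_div]
  refine ⟨hzero, ?_, fun k => ?_⟩
  · rw [← hlog.two_mul_coeff_two hzero, coeff_partialSumLaplace, hσ, Nat.factorial_two,
      Nat.cast_two, mul_div_cancel₀ _ two_ne_zero]
  have hb : 0 < G * (γ * ((k : ℝ) + 3) / Real.exp 1) ^ γ := by
    refine mul_pos hG ?_
    rcases hγ.eq_or_lt with rfl | hγ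
    · simp
    · positivity
  have hC₀ : 2 * Real.exp 1 ≤ 2 * c * ∫ x, V x ∂π := by
    linarith [hE.exp_one_le_integral, hE.integral_le_const_mul]
  have hC₀' : 0 < 2 * c * ∫ x, V x ∂π := (by positivity : 0 < 2 * Real.exp 1).trans_le hC₀
  rw [le_div_iff₀ (by positivity)]
  refine (mul_le_mul_of_nonneg_right (hE.abs_coeff_cumulantSeries_le hmom hh₀ rfl rfl hb
    (fun x => le_mul_rpow_of_le_mul_log_rpow (hE.one_le x) hG.le hγ (hh x) (by positivity)) n)
    (by positivity)).trans ?_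
  rw [mul_assoc (n : ℝ)]
  calc _ ≤ (n : ℝ) * _ := mul_le_mul_of_nonneg_left (cumulant_constant_mul_factorial_le hE.rate_pos
        hE.rate_lt_one hC₀ hG.le hγ k rfl rfl rfl) n.cast_nonneg
    _ = 5 / 2 * (((k + 3)! : ℝ) / 2) ^ (γ + 3) * (n * _) := mul_left_comm _ _ _
    _ ≤ 5 / 2 * (((k + 3)! : ℝ) / 2) ^ (γ + 3) * (σ2 * _) := mul_le_mul_of_nonneg_left
        (mul_le_mul_bernsteinScale_pow n hE.rate_pos hE.rate_lt_one hC₀' hG.le hγ hσ₀ k)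
        (by positivity)
    _ = _ := (mul_assoc _ _ _).symm

lemma measureReal_le_abs_sum_le [IsProbabilityMeasure P] (hE : IsGeometricallyErgodic Q V c ρ π)
    (hX : IsMarkovChain P Xs π Q) (hm : Measurable h) (hG : 0 < G) (hγ : 0 ≤ γ)
    (hh : ∀ x, |h x| ≤ G * Real.log (V x) ^ γ) (hh₀ : ∫ x, h x ∂π = 0) {n : ℕ} {σ2 J t : ℝ}
    (hσ : σ2 = ∫ ω, (∑ j ∈ range n, h (Xs j ω)) ^ 2 ∂P) (hσ₀ : 0 < σ2)
    (hJ : J = bernsteinScale n ρ (2 * c * ∫ x, V x ∂π) G γ σ2) (hJ₀ : 0 < J) (ht : 0 ≤ t) :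
    P.real {ω | t ≤ |∑ j ∈ range n, h (Xs j ω)|} ≤
      2 * Real.exp (-(t ^ 2 / 2) / (σ2 + J ^ (1 / (γ + 3)) * t ^ (2 - 1 / (γ + 3)))) := by
  have hmom := hE.hasAllMoments hm hG.le hγ hh
  have hΛ := hE.cumulantBounds hX hm hG hγ hh hh₀ hσ hσ₀
  rw [← hJ] at hΛ
  refine hΛ.tail_le (hX.isLogDerivCoeff_cumulantSeries hE.invariant hmom n) (by linarith) hσ₀ hJ₀
    ht measureReal_le_one fun q => ?_
  rw [coeff_partialSumLaplace, mul_div_cancel₀ _ (by positivity)]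
  exact (hX.hasAllMoments_sum hE.invariant hmom n).measureReal_le_abs_mul_pow_le ht q

end IsGeometricallyErgodic

end CumulantSeries

theorem bernstein_log_V_general {X Ω : Type*} [MeasurableSpace X] [MeasurableSpace Ω]
    {Q : Kernel X X} [IsMarkovKernel Q] {V : X → ℝ} {c ρ γ : ℝ} {π : Measure X}
    [IsProbabilityMeasure π] (hE : IsGeometricallyErgodic Q V c ρ π) (hγ : 0 ≤ γ) {g : X → ℝ}
    (hg : MemL (fun x => Real.log (V x) ^ γ) g) {n : ℕ} {P : Measure Ω} [IsProbabilityMeasure P]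
    {Xs : ℕ → Ω → X} (hX : IsMarkovChain P Xs π Q) {σ2 J : ℝ}
    (hσ : σ2 = ∫ ω, (∑ j ∈ range n, (g (Xs j ω) - ∫ x, g x ∂π)) ^ 2 ∂P) (hσ₀ : 0 < σ2)
    (hJ : J = bernsteinScale n ρ (2 * c * ∫ x, V x ∂π)
      (vnorm (fun x => Real.log (V x) ^ γ) fun x => g x - ∫ y, g y ∂π) γ σ2) :
    (∀ t : ℝ, 0 ≤ t → P.real {ω | t ≤ |∑ j ∈ range n, (g (Xs j ω) - ∫ x, g x ∂π)|} ≤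
      2 * Real.exp (-(t ^ 2 / 2) / (σ2 + J ^ (1 / (γ + 3)) * t ^ (2 - 1 / (γ + 3))))) ∧
    ∀ δ : ℝ, 0 < δ → δ < 1 →
      P.real {ω | 2 * √σ2 * √(Real.log (4 / δ)) + 4 ^ (γ + 3) * J * Real.log (4 / δ) ^ (γ + 3) ≤
        |∑ j ∈ range n, (g (Xs j ω) - ∫ x, g x ∂π)|} ≤ δ := by
  have hW := hE.one_le_log_rpow hγ
  have hW₀ (x : X) : 0 < Real.log (V x) ^ γ := one_pos.trans_le (hW x)
  have hgc := hg.sub_const hW (∫ x, g x ∂π)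
  obtain ⟨x, hx⟩ : ∃ x, g x - ∫ y, g y ∂π ≠ 0 := by
    by_contra! hzero
    simp [hσ, hzero] at hσ₀
  have hG := hgc.vnorm_pos hW₀ hx
  have hJ₀ : 0 < J := hJ ▸ bernsteinScale_pos n hE.rate_pos hE.rate_lt_one
    (by linarith [hE.one_le_const_mul]) hG hγ
  have htail {t : ℝ} (ht : 0 ≤ t) := hE.measureReal_le_abs_sum_le hX hgc.meas hG hγ
    (fun x => hgc.abs_le_vnorm_mul (hW₀ x)) (hE.integral_sub_integral_eq_zero hγ hg) hσ hσ₀ hJ hJ₀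
    ht
  refine ⟨fun t => htail, fun δ hδ₀ hδ₁ => ?_⟩
  have hlog : 0 ≤ Real.log (4 / δ) := Real.log_nonneg ((one_le_div hδ₀).2 (by linarith))
  exact (htail (by positivity)).trans
    (two_mul_exp_le_of_threshold (by linarith) hσ₀ hJ₀ hδ₀ hδ₁ rfl)

/-- Theorem 5 (Bernstein-type inequality for the stationary chain, class `L_{W^γ}`). -/
theorem bernstein_log_V
    {X : Type*} [MeasurableSpace X]
    (Q : ProbabilityTheory.Kernel X X) [ProbabilityTheory.IsMarkovKernel Q]
    (V : X → ℝ) (lam b : ℝ) (m : ℕ) (eps d c ρ : ℝ) (piQ : Measure X)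
    [IsProbabilityMeasure piQ]
    -- Assumption A1
    (hV : Measurable V) (hVe : ∀ x, Real.exp 1 ≤ V x)
    (hlam0 : 0 < lam) (hlam1 : lam < 1) (hb : 0 ≤ b)
    (hdrift : ∀ x, ∫ y, V y ∂(Q x) ≤ lam * V x + b)
    -- Assumption A2
    (hm : 1 ≤ m) (heps0 : 0 < eps) (heps1 : eps < 1) (hd : 0 ≤ d)
    (hsmallcond : lam + 2 * b / (1 + d) < 1)
    (hsmall : ∃ ν : Measure X, IsProbabilityMeasure ν ∧
      ∀ x, V x ≤ d → ∀ A : Set X, MeasurableSet A →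
        ENNReal.ofReal eps * ν A ≤ (kIter Q m) x A)
    -- piQ is the unique invariant probability measure, with piQ(V) < ∞
    (hinv : piQ.bind (fun x => Q x) = piQ)
    (huniq : ∀ π' : Measure X, IsProbabilityMeasure π' →
      π'.bind (fun x => Q x) = π' → π' = piQ)
    (hpiV : Integrable V piQ)
    -- geometric ergodicity constants c ≥ 1, ρ ∈ (0,1)
    (hc : 1 ≤ c) (hρ0 : 0 < ρ) (hρ1 : ρ < 1)
    (herg : ∀ ξ : Measure X, IsProbabilityMeasure ξ → Integrable V ξ → ∀ k : ℕ,
      wTV V (ξ.bind (fun x => (kIter Q k) x)) piQ ≤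
        c * ((∫ x, V x ∂ξ) + ∫ x, V x ∂piQ) * ρ ^ k)
    -- γ and the function g ∈ L_{W^γ}
    (γ : ℝ) (hγ : 0 ≤ γ)
    (g : X → ℝ) (hg : MemL (fun x => Real.log (V x) ^ γ) g)
    (n : ℕ) (hn : 1 ≤ n)
    -- the stationary canonical chain
    {Ω : Type*} [MeasurableSpace Ω] (P : Measure Ω) [IsProbabilityMeasure P]
    (Xs : ℕ → Ω → X) (hchain : IsMarkovChain P Xs piQ Q)
    -- the variance of S_n is positive
    (hvar : 0 < ∫ ω, (∑ ℓ ∈ Finset.range n, (g (Xs ℓ ω) - ∫ x, g x ∂piQ)) ^ 2 ∂P)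
    -- the constant J_n
    (Jn : ℝ)
    (hJn : Jn =
      max ((n : ℝ) * ρ ^ (-(1 : ℝ) / 2) * (Real.log (1 / ρ))⁻¹ *
            (2 * c * ∫ x, V x ∂piQ) ^ 2 *
            vnorm (fun x => Real.log (V x) ^ γ) (fun x => g x - ∫ y, g y ∂piQ) ^ 2 /
            (∫ ω, (∑ ℓ ∈ Finset.range n, (g (Xs ℓ ω) - ∫ x, g x ∂piQ)) ^ 2 ∂P)) 1 *
        (2 ^ (1 + 3 * γ) * γ ^ (3 * γ) * (2 * c * ∫ x, V x ∂piQ) *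
          vnorm (fun x => Real.log (V x) ^ γ) (fun x => g x - ∫ y, g y ∂piQ) /
          Real.log (1 / ρ))) :
    (∀ t : ℝ, 0 ≤ t →
      (P {ω | t ≤ |∑ ℓ ∈ Finset.range n, (g (Xs ℓ ω) - ∫ x, g x ∂piQ)|}).toReal ≤
        2 * Real.exp (-(t ^ 2 / 2) /
          ((∫ ω, (∑ ℓ ∈ Finset.range n, (g (Xs ℓ ω) - ∫ x, g x ∂piQ)) ^ 2 ∂P)
            + Jn ^ (1 / (γ + 3)) * t ^ (2 - 1 / (γ + 3)))))
    ∧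
    (∀ δ : ℝ, 0 < δ → δ < 1 →
      (P {ω |
          2 * Real.sqrt (∫ ω', (∑ ℓ ∈ Finset.range n,
                (g (Xs ℓ ω') - ∫ x, g x ∂piQ)) ^ 2 ∂P) * Real.sqrt (Real.log (4 / δ))
            + 4 ^ (γ + 3) * Jn * Real.log (4 / δ) ^ (γ + 3) ≤
          |∑ ℓ ∈ Finset.range n, (g (Xs ℓ ω) - ∫ x, g x ∂piQ)|}).toReal ≤ δ) :=
  bernstein_log_V_general ⟨hV, hVe, hinv, hpiV, hc, hρ0, hρ1, herg⟩ hγ hg hchain rfl hvar hJn
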